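/- For every real number c with 16/17 < c < 1, one has limsup_{x→∞} T_c(x)/π(x) < 1/2; that is, there exist δ > 0 and x₀ such that T_c(x) ≤ (1/2 − δ)·π(x) for all x ≥ x₀. -/

import Mathlib

open Real Finset

attribute [local instance] Classical.propDecidable

/-- `Pplus n` is the largest prime factor of `n`, with the convention `Pplus 1 = 1`. -/
noncomputable def Pplus (n : ℕ) : ℕ := if n = 1 then 1 else n.primeFactors.sup id

/-- `primePi x` is the number of primes not exceeding `x`. -/
noncomputable def primePi (x : ℝ) : ℕ :=
  ((Finset.range (⌊x⌋₊ + 1)).filter Nat.Prime).card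

/-- `T c x = #{p ≤ x : p prime, P⁺(p-1) ≥ p^c}`. -/
noncomputable def T (c x : ℝ) : ℕ :=
  ((Finset.range (⌊x⌋₊ + 1)).filter
    (fun p : ℕ => p.Prime ∧ (p : ℝ) ^ c ≤ (Pplus (p - 1) : ℝ))).card

section PNT
open MeasureTheory Filter Topology Complex ArithmeticFunction

/-- Fejér-type kernel. -/
noncomputable def kf (l v : ℝ) : ℝ := 2 * (1 - Real.cos (l * v)) / (l * v ^ 2)

lemma kf_nonneg {l : ℝ} (hl : 0 < l) (v : ℝ) : 0 ≤ kf l v := by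
  unfold kf
  have := Real.cos_le_one (l * v)
  apply div_nonneg <;> nlinarith [sq_nonneg v]

lemma kf_le {l : ℝ} (hl : 0 < l) (v : ℝ) : kf l v ≤ (l + 4 / l) * (1 + v ^ 2)⁻¹ := by
  unfold kf
  rcases eq_or_ne v 0 with rfl | hv
  · simp; positivity
  have h1 := Real.one_sub_sq_div_two_le_cos (x := l * v)
  have h2 := Real.neg_one_le_cos (l * v)
  have hv2 : 0 < v ^ 2 := by positivity
  rw [← div_eq_mul_inv, div_le_div_iff₀ (by positivity) (by positivity)]
  have : (l + 4 / l) * (l * v ^ 2) = (l * v) ^ 2 + 4 * v ^ 2 := by field_simp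
  rw [this]
  nlinarith

lemma kf_tail {l h : ℝ} (hl : 0 < l) (hh : 0 < h) {v : ℝ} (hv : h < |v|) :
    kf l v ≤ (4 / l * (1 + 1 / h ^ 2)) * (1 + v ^ 2)⁻¹ := by
  unfold kf
  have h2 := Real.neg_one_le_cos (l * v)
  have hv2 : h ^ 2 ≤ v ^ 2 := by rw [← sq_abs v]; gcongr
  have hv0 : 0 < v ^ 2 := lt_of_lt_of_le (by positivity) hv2
  have e1 : 2 * (1 - Real.cos (l * v)) / (l * v ^ 2) ≤ 4 / (l * v ^ 2) := by gcongr; linarith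
  refine e1.trans ?_
  have : 1 + v ^ 2 ≤ (1 + 1 / h ^ 2) * v ^ 2 := by
    have : 1 ≤ 1 / h ^ 2 * v ^ 2 := by
      rw [one_div, inv_mul_eq_div, one_le_div (by positivity)]; exact hv2
    linarith
  rw [← div_eq_mul_inv, div_le_div_iff₀ (by positivity) (by positivity)]
  calc 4 * (1 + v ^ 2) ≤ 4 * ((1 + 1 / h ^ 2) * v ^ 2) := by gcongr
    _ = _ := by field_simp

lemma kf_measurable (l : ℝ) : Measurable (kf l) := by
  unfold kf; fun_prop

lemma kf_integrable {l : ℝ} (hl : 0 < l) : Integrable (kf l) := by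
  refine (integrable_inv_one_add_sq.const_mul (l + 4 / l)).mono'
    (kf_measurable l).aestronglyMeasurable (Eventually.of_forall fun v => ?_)
  rw [Real.norm_of_nonneg (kf_nonneg hl v)]
  exact kf_le hl v

lemma kf_integral {l : ℝ} (hl : 0 < l) : ∫ v, kf l v = ∫ v, kf 1 v := by
  have : ∀ v, kf l v = l * kf 1 (l * v) := by
    intro v; unfold kf
    rcases eq_or_ne v 0 with rfl | hv
    · simp
    · field_simp
  simp_rw [this]
  rw [integral_const_mul, Measure.integral_comp_mul_left, abs_of_pos (inv_pos.2 hl), smul_eq_mul]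
  field_simp

lemma kf_integral_pos : 0 < ∫ v, kf 1 v := by
  rw [integral_pos_iff_support_of_nonneg (fun v => kf_nonneg one_pos v) (kf_integrable one_pos)]
  refine lt_of_lt_of_le ?_ (measure_mono (s := Set.Ioo (0:ℝ) 1) ?_)
  · simp
  · intro v hv
    rw [Function.mem_support]
    unfold kf
    have hc : Real.cos (1 * v) < 1 := by
      rw [one_mul, ← Real.cos_zero]
      exact Real.cos_lt_cos_of_nonneg_of_le_pi_div_two le_rfl
        (by linarith [hv.2, Real.pi_gt_three]) hv.1
    have := hv.1
    apply ne_of_gt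
    apply div_pos <;> [linarith; positivity]

lemma fejer_aux {l v : ℝ} (hl : 0 < l) (hv : v ≠ 0) :
    ∫ t in (0:ℝ)..l, (1 - t / l) * Real.cos (v * t) = (1 - Real.cos (l * v)) / (l * v ^ 2) := by
  have hd : ∀ t ∈ Set.uIcc 0 l, HasDerivAt
      (fun t => (1 - t / l) * (Real.sin (v * t) / v) - Real.cos (v * t) / (l * v ^ 2))
      ((1 - t / l) * Real.cos (v * t)) t := by
    intro t _
    have h1 : HasDerivAt (fun t : ℝ => v * t) v t := by simpa using (hasDerivAt_id t).const_mul v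
    have h2 : HasDerivAt (fun t : ℝ => 1 - t / l) (-(1 / l)) t := by
      simpa using ((hasDerivAt_id t).div_const l).const_sub 1
    have h3 := h2.mul ((h1.sin).div_const v)
    have h4 := (h1.cos).div_const (l * v ^ 2)
    refine (h3.sub h4).congr_deriv ?_
    field_simp
    ring
  rw [intervalIntegral.integral_eq_sub_of_hasDerivAt hd
    (by apply Continuous.intervalIntegrable; fun_prop)]
  simp [hl.ne']
  rw [mul_comm v l]
  ring

lemma fejer {l v : ℝ} (hl : 0 < l) (hv : v ≠ 0) :
    ∫ t in (-l)..l, ((1 - |t| / l : ℝ) : ℂ) * cexp (I * v * t) = (kf l v : ℂ) := by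
  have hc : Continuous fun t : ℝ => ((1 - |t| / l : ℝ) : ℂ) * cexp (I * v * t) := by fun_prop
  rw [← intervalIntegral.integral_add_adjacent_intervals (b := 0)
    (hc.intervalIntegrable _ _) (hc.intervalIntegrable _ _)]
  have e1 : ∫ t in (-l)..0, ((1 - |t| / l : ℝ) : ℂ) * cexp (I * v * t)
      = ∫ t in (0:ℝ)..l, ((1 - |t| / l : ℝ) : ℂ) * cexp (-(I * v * t)) := by
    have := intervalIntegral.integral_comp_neg (a := 0) (b := l)
      (fun t : ℝ => ((1 - |t| / l : ℝ) : ℂ) * cexp (I * v * t))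
    rw [neg_zero] at this
    rw [← this]
    congr 1; ext t; simp
  rw [e1, ← intervalIntegral.integral_add]
  · have : Set.EqOn (fun t : ℝ => ((1 - |t| / l : ℝ) : ℂ) * cexp (-(I * v * t)) +
        ((1 - |t| / l : ℝ) : ℂ) * cexp (I * v * t))
        (fun t => ((2 * ((1 - t / l) * Real.cos (v * t)) : ℝ) : ℂ)) (Set.uIcc 0 l) := by
      intro t ht
      rw [Set.uIcc_of_le hl.le] at ht
      simp only [abs_of_nonneg ht.1]
      push_cast
      rw [Complex.cos]
      ring_nf
    rw [intervalIntegral.integral_congr this, intervalIntegral.integral_ofReal,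
      intervalIntegral.integral_const_mul, fejer_aux hl hv]
    unfold kf
    rw [mul_div_assoc]
  · apply Continuous.intervalIntegrable; fun_prop
  · apply Continuous.intervalIntegrable; fun_prop

end PNT

section PNT
open MeasureTheory Filter Topology Complex ArithmeticFunction

noncomputable def errF (u : ℝ) : ℝ :=
  if 0 < u then Chebyshev.psi (Real.exp u) * Real.exp (-u) - 1 else 0

noncomputable def gAux (s : ℂ) : ℂ :=
  (vonMangoldt.LFunctionResidueClassAux (q := 1) 1 s - 1) / s

lemma gAux_cont : ContinuousOn gAux {s | 1 ≤ s.re} := by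
  unfold gAux
  refine ((vonMangoldt.continuousOn_LFunctionResidueClassAux (q := 1) 1).sub
    continuousOn_const).div continuousOn_id ?_
  rintro s hs rfl
  simp at hs
  linarith

lemma psi_exp_le (u : ℝ) : Chebyshev.psi (Real.exp u) * Real.exp (-u) ≤ Real.log 4 + 4 := by
  have := Chebyshev.psi_le_const_mul_self (Real.exp_pos u).le
  calc _ ≤ (Real.log 4 + 4) * Real.exp u * Real.exp (-u) := by gcongr
    _ = _ := by rw [mul_assoc, ← Real.exp_add]; simp

lemma psi_exp_nonneg (u : ℝ) : 0 ≤ Chebyshev.psi (Real.exp u) * Real.exp (-u) :=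
  mul_nonneg (Chebyshev.psi_nonneg _) (Real.exp_pos _).le

lemma errF_le (u : ℝ) : |errF u| ≤ Real.log 4 + 4 := by
  have h4 : 0 < Real.log 4 := Real.log_pos (by norm_num)
  unfold errF
  split_ifs
  · have := psi_exp_le u
    have := psi_exp_nonneg u
    rw [abs_le]; constructor <;> linarith
  · simp; positivity

lemma errF_measurable : Measurable errF := by
  unfold errF
  refine Measurable.ite measurableSet_Ioi ?_ measurable_const
  have := Chebyshev.psi_mono.measurable
  fun_prop

lemma psi_laplace {s : ℂ} (hs : 1 < s.re) :
    LSeries (fun n => (vonMangoldt n : ℂ)) s =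
      s * ∫ u in Set.Ioi (0:ℝ), ((Chebyshev.psi (Real.exp u) * Real.exp (-u) : ℝ) : ℂ)
        * cexp (-(s - 1) * u) := by
  have h := LSeries_eq_mul_integral_of_nonneg (fun n => vonMangoldt n) (r := 1) zero_le_one hs
    (by
      refine Asymptotics.IsBigO.of_bound (Real.log 4 + 4) (Eventually.of_forall fun n => ?_)
      have h1 := Chebyshev.psi_le_const_mul_self (Nat.cast_nonneg (α := ℝ) n)
      have h2 : ∑ k ∈ Finset.Icc 1 n, vonMangoldt k = Chebyshev.psi n := by
        rw [Chebyshev.psi, Nat.floor_natCast]; rfl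
      rw [h2, Real.norm_of_nonneg (Chebyshev.psi_nonneg _)]
      simpa using h1) (fun n => vonMangoldt_nonneg)
  rw [h]
  congr 1
  have himg : Set.image Real.exp (Set.Ioi 0) = Set.Ioi 1 := by
    ext y; constructor
    · rintro ⟨u, hu, rfl⟩; simpa using hu
    · intro hy
      exact ⟨Real.log y, Real.log_pos hy, Real.exp_log (zero_lt_one.trans hy)⟩
  rw [← himg, integral_image_eq_integral_abs_deriv_smul measurableSet_Ioi
    (fun x _ => (Real.hasDerivAt_exp x).hasDerivWithinAt) Real.exp_injective.injOn]
  refine setIntegral_congr_fun measurableSet_Ioi fun u hu => ?_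
  have h2 : (∑ k ∈ Finset.Icc 1 ⌊Real.exp u⌋₊, ((vonMangoldt k : ℝ) : ℂ))
      = (Chebyshev.psi (Real.exp u) : ℂ) := by
    rw [Chebyshev.psi]; push_cast; rfl
  rw [h2, abs_of_pos (Real.exp_pos u), Complex.real_smul]
  push_cast
  rw [← Complex.ofReal_exp, Complex.cpow_def_of_ne_zero (by exact_mod_cast (Real.exp_pos u).ne'),
    ← Complex.ofReal_log (Real.exp_pos u).le, Real.log_exp]
  push_cast
  have : cexp (u * -(s + 1)) * cexp u = cexp (-u) * cexp (-(s - 1) * u) := by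
    rw [← Complex.exp_add, ← Complex.exp_add]; ring_nf
  linear_combination (Chebyshev.psi (Real.exp u) : ℂ) * this

lemma errF_laplace {s : ℂ} (hs : 1 < s.re) :
    ∫ u, (errF u : ℂ) * cexp (-(s - 1) * u) = gAux s := by
  have h0 : s ≠ 0 := by rintro rfl; simp at hs; linarith
  have h1 : s - 1 ≠ 0 := by
    intro h; rw [sub_eq_zero] at h; subst h; simp at hs
  have hre : (-(s - 1)).re < 0 := by simp; linarith
  have hI : IntegrableOn (fun u : ℝ => cexp (-(s - 1) * u)) (Set.Ioi 0) :=
    integrableOn_exp_mul_complex_Ioi hre 0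
  have hI2 : IntegrableOn (fun u : ℝ => ((Chebyshev.psi (Real.exp u) * Real.exp (-u) : ℝ) : ℂ)
        * cexp (-(s - 1) * u)) (Set.Ioi 0) := by
    refine Integrable.bdd_mul (c := Real.log 4 + 4) hI ?_ ?_
    · have := Chebyshev.psi_mono.measurable
      exact (by fun_prop : Measurable _).aestronglyMeasurable
    · refine Eventually.of_forall fun u => ?_
      rw [Complex.norm_real, Real.norm_of_nonneg (psi_exp_nonneg u)]
      exact psi_exp_le u
  rw [← setIntegral_eq_integral_of_forall_compl_eq_zero (s := Set.Ioi 0)]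
  · have e : Set.EqOn (fun u : ℝ => (errF u : ℂ) * cexp (-(s - 1) * u))
        (fun u : ℝ => ((Chebyshev.psi (Real.exp u) * Real.exp (-u) : ℝ) : ℂ)
        * cexp (-(s - 1) * u) - cexp (-(s - 1) * u)) (Set.Ioi 0) := by
      intro u hu
      simp only [errF, if_pos (Set.mem_Ioi.1 hu)]
      push_cast; ring
    rw [setIntegral_congr_fun measurableSet_Ioi e, integral_sub hI2 hI,
      integral_exp_mul_complex_Ioi hre]
    have hL := psi_laplace hs
    have hA := vonMangoldt.eqOn_LFunctionResidueClassAux (q := 1) (a := 1) isUnit_one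
      (show s ∈ {s : ℂ | 1 < s.re} from hs)
    have hr : (fun n => ((vonMangoldt.residueClass (1 : ZMod 1) n : ℝ) : ℂ))
        = fun n => (vonMangoldt n : ℂ) := by
      ext n
      simp [vonMangoldt.residueClass, Subsingleton.elim (n : ZMod 1) 1]
    simp only [hr] at hA
    rw [gAux, hA, hL]
    generalize (∫ u in Set.Ioi (0:ℝ), ((Chebyshev.psi (Real.exp u) * Real.exp (-u) : ℝ) : ℂ)
        * cexp (-(s - 1) * u)) = J
    simp only [ofReal_zero, mul_zero, Complex.exp_zero, Nat.totient_one, Nat.cast_one, inv_one,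
      neg_div_neg_eq]
    field_simp
    ring
  · intro u hu
    simp only [Set.mem_Ioi, not_lt] at hu
    simp [errF, not_lt.2 hu]

end PNT

section PNT
open MeasureTheory Filter Topology Complex ArithmeticFunction

lemma errF_fubini {l ε : ℝ} (hl : 0 < l) (hε : 0 < ε) (y : ℝ) :
    ∫ t in (-l)..l, ((1 - |t| / l : ℝ) : ℂ) * cexp (I * y * t) * gAux (1 + ε + I * t)
      = ∫ u, ((errF u * Real.exp (-ε * u) * kf l (y - u) : ℝ) : ℂ) := by
  have hL : ∀ t : ℝ, gAux (1 + ε + I * t) = ∫ u, (errF u : ℂ) * cexp (-(ε + I * t) * u) := by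
    intro t
    rw [← errF_laplace (by simp [hε])]
    congr 1; ext u; ring_nf
  rw [intervalIntegral.integral_of_le (by linarith)]
  simp_rw [hL, ← integral_const_mul]
  rw [integral_integral_swap]
  · refine integral_congr_ae ?_
    have : ∀ᵐ u : ℝ, u ≠ y := by simp [ae_iff, measure_singleton]
    filter_upwards [this] with u hu
    rw [← intervalIntegral.integral_of_le (by linarith)]
    push_cast
    rw [← fejer hl (sub_ne_zero.2 (Ne.symm hu)), ← intervalIntegral.integral_const_mul]
    congr 1; ext t
    have : cexp (I * y * t) * cexp (-(ε + I * t) * u)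
        = cexp (-ε * u) * cexp (I * ((y - u : ℝ) : ℂ) * t) := by
      rw [← Complex.exp_add, ← Complex.exp_add]; push_cast; ring_nf
    push_cast at this ⊢
    linear_combination ((1 - |t| / l) * errF u : ℂ) * this
  · have hb : Integrable (fun u : ℝ => errF u * Real.exp (-ε * u)) := by
      have h1 : IntegrableOn (fun u : ℝ => Real.exp (-ε * u)) (Set.Ioi 0) :=
        integrableOn_exp_mul_Ioi (by linarith) 0
      have h2 : IntegrableOn (fun u : ℝ => errF u * Real.exp (-ε * u)) (Set.Ioi 0) :=
        h1.bdd_mul errF_measurable.aestronglyMeasurable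
          (Eventually.of_forall fun u => errF_le u)
      rw [← integrableOn_iff_integrable_of_support_subset (s := Set.Ioi (0:ℝ))]
      · exact h2
      · intro u hu
        by_contra h
        apply hu
        simp only [Set.mem_Ioi, not_lt] at h
        simp [errF, not_lt.2 h]
    have ht : Integrable (fun t : ℝ => (1 - |t| / l)) (volume.restrict (Set.Ioc (-l) l)) := by
      have : Continuous (fun t : ℝ => (1 - |t| / l)) := by fun_prop
      exact this.integrableOn_Ioc
    refine (ht.mul_prod hb).mono ?_ ?_
    · apply Measurable.aestronglyMeasurable
      have := errF_measurable
      simp only [Function.uncurry_def]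
      fun_prop
    · refine Eventually.of_forall fun z => ?_
      simp only [Function.uncurry_def, norm_mul, Complex.norm_real, Complex.norm_exp]
      simp

lemma errF_smooth {l : ℝ} (hl : 0 < l) (y : ℝ) :
    ∫ t in (-l)..l, ((1 - |t| / l : ℝ) : ℂ) * cexp (I * y * t) * gAux (1 + I * t)
      = ∫ u, ((errF u * kf l (y - u) : ℝ) : ℂ) := by
  have hcont : ContinuousOn (fun p : ℝ × ℝ => gAux (1 + p.1 + I * p.2))
      (Set.Icc 0 1 ×ˢ Set.Icc (-l) l) := by
    refine gAux_cont.comp (by fun_prop) ?_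
    rintro ⟨e, t⟩ ⟨he, _⟩
    simpa using he.1
  obtain ⟨C, hC⟩ := (isCompact_Icc.prod isCompact_Icc).exists_bound_of_continuousOn hcont
  have T1 : Tendsto (fun ε : ℝ => ∫ t in (-l)..l,
      ((1 - |t| / l : ℝ) : ℂ) * cexp (I * y * t) * gAux (1 + ε + I * t)) (𝓝[>] 0)
      (𝓝 (∫ t in (-l)..l, ((1 - |t| / l : ℝ) : ℂ) * cexp (I * y * t) * gAux (1 + I * t))) := by
    simp_rw [intervalIntegral.integral_of_le (show -l ≤ l by linarith)]
    have hev : ∀ᶠ ε : ℝ in 𝓝[>] 0, ε ∈ Set.Ioo (0:ℝ) 1 := Ioo_mem_nhdsGT one_pos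
    have hc2 : ∀ ε ∈ Set.Icc (0:ℝ) 1, ContinuousOn (fun t : ℝ => gAux (1 + ε + I * t))
        (Set.Icc (-l) l) := by
      intro ε he
      exact hcont.comp (f := fun t : ℝ => (ε, t)) (by fun_prop) (fun t ht => ⟨he, ht⟩)
    refine tendsto_integral_filter_of_dominated_convergence (fun _ => C) ?_ ?_ ?_ ?_
    · filter_upwards [hev] with ε he
      refine AEStronglyMeasurable.mul (by fun_prop) ?_
      exact ((hc2 ε ⟨he.1.le, he.2.le⟩).mono Set.Ioc_subset_Icc_self).aestronglyMeasurable
        measurableSet_Ioc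
    · filter_upwards [hev] with ε he
      filter_upwards [ae_restrict_mem measurableSet_Ioc] with t ht
      have h1 := hC (ε, t) ⟨⟨he.1.le, he.2.le⟩, ⟨ht.1.le, ht.2⟩⟩
      have h2 : ‖((1 - |t| / l : ℝ) : ℂ) * cexp (I * y * t)‖ ≤ 1 := by
        rw [norm_mul, Complex.norm_exp, Complex.norm_real]
        have : |t| ≤ l := abs_le.2 ⟨ht.1.le, ht.2⟩
        have h3 : |t| / l ≤ 1 := (div_le_one hl).2 this
        have h4 : 0 ≤ |t| / l := by positivity
        simp only [mul_re, I_re, ofReal_re, zero_mul, I_im, ofReal_im, mul_zero, sub_self, mul_im,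
          Real.exp_zero, mul_one, one_mul, zero_add]
        rw [Real.norm_eq_abs, abs_le]; constructor <;> linarith
      rw [norm_mul]
      calc _ ≤ 1 * C := by
            gcongr
        _ = C := one_mul C
    · exact integrable_const C
    · filter_upwards [ae_restrict_mem measurableSet_Ioc] with t ht
      refine Tendsto.const_mul _ ?_
      have h1 : ContinuousWithinAt (fun e : ℝ => gAux (1 + e + I * t)) (Set.Ici 0) 0 := by
        refine ContinuousWithinAt.comp (t := {s : ℂ | 1 ≤ s.re}) (gAux_cont _ (by simp))
          (by fun_prop) ?_
        intro e he
        simpa using he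
      have h2 := h1.tendsto.mono_left (nhdsWithin_mono 0 Set.Ioi_subset_Ici_self)
      simpa using h2
  have T2 : Tendsto (fun ε : ℝ => ∫ u, ((errF u * Real.exp (-ε * u) * kf l (y - u) : ℝ) : ℂ))
      (𝓝[>] 0) (𝓝 (∫ u, ((errF u * kf l (y - u) : ℝ) : ℂ))) := by
    refine tendsto_integral_filter_of_dominated_convergence
      (fun u => (Real.log 4 + 4) * kf l (y - u)) ?_ ?_ ?_ ?_
    · refine Eventually.of_forall fun ε => ?_
      have := errF_measurable
      have := kf_measurable l
      exact (by fun_prop : Measurable _).aestronglyMeasurable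
    · filter_upwards [self_mem_nhdsWithin] with ε he
      refine Eventually.of_forall fun u => ?_
      rw [Complex.norm_real, norm_mul, norm_mul, Real.norm_of_nonneg (kf_nonneg hl _)]
      refine mul_le_mul_of_nonneg_right ?_ (kf_nonneg hl _)
      rcases lt_or_ge 0 u with hu | hu
      · have h1 := errF_le u
        have h2 : Real.exp (-ε * u) ≤ 1 := by
          rw [Real.exp_le_one_iff]
          have : 0 < ε := he
          nlinarith
        rw [Real.norm_of_nonneg (Real.exp_pos _).le, Real.norm_eq_abs]
        calc _ ≤ |errF u| * 1 := by gcongr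
          _ ≤ _ := by linarith
      · have h4 : 0 < Real.log 4 := Real.log_pos (by norm_num)
        simp [errF, not_lt.2 hu]
        positivity
    · exact ((kf_integrable hl).comp_sub_left y).const_mul _
    · refine Eventually.of_forall fun u => ?_
      have : Continuous (fun ε : ℝ => ((errF u * Real.exp (-ε * u) * kf l (y - u) : ℝ) : ℂ)) := by
        fun_prop
      have h := (this.tendsto 0).mono_left (nhdsWithin_le_nhds (s := Set.Ioi (0:ℝ)))
      simpa using h
  refine tendsto_nhds_unique T1 (T2.congr' ?_)
  filter_upwards [self_mem_nhdsWithin] with ε he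
  exact (errF_fubini hl he y).symm

lemma errF_RL {l : ℝ} (hl : 0 < l) :
    Tendsto (fun y : ℝ => ∫ u, errF u * kf l (y - u)) atTop (𝓝 0) := by
  set f : ℝ → ℂ := (Set.Ioc (-l) l).indicator
    (fun t : ℝ => ((1 - |t| / l : ℝ) : ℂ) * gAux (1 + I * t)) with hf
  have h := Real.tendsto_integral_exp_smul_cocompact f
  have h2 : Tendsto (fun y : ℝ => -(y / (2 * π))) atTop (cocompact ℝ) := by
    rw [_root_.cocompact_eq_atBot_atTop]
    refine Tendsto.mono_right ?_ le_sup_left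
    exact tendsto_neg_atTop_atBot.comp (tendsto_id.atTop_div_const (by positivity))
  have h3 := h.comp h2
  have h4 : Tendsto (fun y : ℝ => ((∫ u, errF u * kf l (y - u) : ℝ) : ℂ)) atTop (𝓝 0) := by
    refine h3.congr fun y => ?_
    have e0 : ((∫ u, errF u * kf l (y - u) : ℝ) : ℂ)
        = ∫ u, ((errF u * kf l (y - u) : ℝ) : ℂ) := integral_ofReal.symm
    rw [e0, ← errF_smooth hl y, intervalIntegral.integral_of_le (by linarith),
      ← integral_indicator measurableSet_Ioc]
    simp only [Function.comp]
    congr 1; ext t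
    by_cases ht : t ∈ Set.Ioc (-l) l
    · simp only [hf, Set.indicator_of_mem ht]
      rw [Circle.smul_def, Real.fourierChar_apply, smul_eq_mul]
      have : ((2 * π * -(t * -(y / (2 * π))) : ℝ) : ℂ) * I = I * y * t := by
        have hpi : (π : ℂ) ≠ 0 := by exact_mod_cast Real.pi_ne_zero
        push_cast; field_simp
      rw [this]; ring
    · simp only [hf, Set.indicator_of_notMem ht, smul_zero]
  have h5 := (Complex.continuous_re.tendsto 0).comp h4
  simpa [Function.comp_def] using h5

end PNT

section PNT
open MeasureTheory Filter Topology

lemma psi_tauber_step {l h : ℝ} (hl : 0 < l) (hh : 0 < h) {y : ℝ} (hy : 2 * h < y) :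
    (∫ v, kf 1 v) + ∫ u, errF u * kf l (y - h - u) ≤
      Real.exp (2 * h) * (Chebyshev.psi (Real.exp y) * Real.exp (-y)) * (∫ v, kf 1 v)
      + (Real.log 4 + 5) * (4 / l * (1 + 1 / h ^ 2) * π) := by
  have h4 : 0 < Real.log 4 := Real.log_pos (by norm_num)
  set B := Chebyshev.psi (Real.exp y) * Real.exp (-y) with hB
  have hB0 : 0 ≤ B := psi_exp_nonneg y
  have hi := (kf_integrable hl).comp_sub_left (y - h)
  have hie : Integrable (fun u => errF u * kf l (y - h - u)) :=
    hi.bdd_mul errF_measurable.aestronglyMeasurable (Eventually.of_forall fun u => errF_le u)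
  have hic := (integrable_inv_one_add_sq.comp_sub_left (y - h)).const_mul
    ((Real.log 4 + 5) * (4 / l * (1 + 1 / h ^ 2)))
  have e1 : ∫ u, kf l (y - h - u) = ∫ v, kf 1 v := by
    rw [integral_sub_left_eq_self (fun v => kf l v) volume (y - h), kf_integral hl]
  have e2 : ∫ u : ℝ, (1 + (y - h - u) ^ 2)⁻¹ = π := by
    rw [integral_sub_left_eq_self (fun v : ℝ => (1 + v ^ 2)⁻¹) volume (y - h)]
    exact integral_univ_inv_one_add_sq
  rw [← e1, ← integral_add hi hie]
  have e3 : (Real.log 4 + 5) * (4 / l * (1 + 1 / h ^ 2) * π) =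
      ∫ u : ℝ, (Real.log 4 + 5) * (4 / l * (1 + 1 / h ^ 2)) * (1 + (y - h - u) ^ 2)⁻¹ := by
    rw [integral_const_mul, e2]; ring
  rw [e3, ← integral_const_mul, ← integral_add (hi.const_mul _) hic]
  refine integral_mono (hi.add hie) ((hi.const_mul _).add hic) fun u => ?_
  simp only
  have hk := kf_nonneg hl (y - h - u)
  have hp : 0 < (1 + (y - h - u) ^ 2)⁻¹ := by positivity
  by_cases hu : |y - h - u| ≤ h
  · have hu' := abs_le.1 hu
    have hu0 : 0 < u := by linarith
    have hE : errF u = Chebyshev.psi (Real.exp u) * Real.exp (-u) - 1 := if_pos hu0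
    have hle : Chebyshev.psi (Real.exp u) * Real.exp (-u) ≤ Real.exp (2 * h) * B := by
      have m : Chebyshev.psi (Real.exp u) ≤ Chebyshev.psi (Real.exp y) :=
        Chebyshev.psi_mono (Real.exp_le_exp.2 (by linarith))
      have m2 : Real.exp (-u) ≤ Real.exp (2 * h) * Real.exp (-y) := by
        rw [← Real.exp_add]; exact Real.exp_le_exp.2 (by linarith)
      calc _ ≤ Chebyshev.psi (Real.exp y) * (Real.exp (2 * h) * Real.exp (-y)) := by
            gcongr
        _ = _ := by rw [hB]; ring
    have : kf l (y - h - u) + errF u * kf l (y - h - u) ≤ Real.exp (2 * h) * B * kf l (y - h - u) := by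
      rw [hE]; nlinarith
    have : 0 ≤ (Real.log 4 + 5) * (4 / l * (1 + 1 / h ^ 2)) * (1 + (y - h - u) ^ 2)⁻¹ := by
      positivity
    linarith
  · push Not at hu
    have ht := kf_tail hl hh hu
    have hE := (abs_le.1 (errF_le u)).2
    have : 0 ≤ Real.exp (2 * h) * B * kf l (y - h - u) := by positivity
    have : kf l (y - h - u) + errF u * kf l (y - h - u)
        ≤ (Real.log 4 + 5) * kf l (y - h - u) := by nlinarith
    have : (Real.log 4 + 5) * kf l (y - h - u) ≤
      (Real.log 4 + 5) * (4 / l * (1 + 1 / h ^ 2) * (1 + (y - h - u) ^ 2)⁻¹) := by gcongr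
    linarith

lemma psi_lower {ε : ℝ} (hε : 0 < ε) :
    ∀ᶠ y : ℝ in atTop, 1 - ε ≤ Chebyshev.psi (Real.exp y) * Real.exp (-y) := by
  have h4 : 0 < Real.log 4 := Real.log_pos (by norm_num)
  set M := ∫ v, kf 1 v with hM
  have hMpos : 0 < M := kf_integral_pos
  obtain ⟨h, hh, hh2⟩ : ∃ h : ℝ, 0 < h ∧ 1 - ε / 2 ≤ Real.exp (-(2 * h)) := by
    refine ⟨ε / 4, by positivity, ?_⟩
    have := Real.add_one_le_exp (-(2 * (ε / 4)))
    linarith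
  obtain ⟨l, hl, hl2⟩ : ∃ l : ℝ, 0 < l ∧
      (Real.log 4 + 5) * (4 / l * (1 + 1 / h ^ 2) * π) ≤ ε / 4 * M := by
    set D := (Real.log 4 + 5) * (4 * (1 + 1 / h ^ 2) * π) with hD
    have hDpos : 0 < D := by positivity
    refine ⟨D / (ε / 4 * M), by positivity, le_of_eq ?_⟩
    have : (Real.log 4 + 5) * (4 / (D / (ε / 4 * M)) * (1 + 1 / h ^ 2) * π)
      = D / (D / (ε / 4 * M)) := by rw [hD]; ring
    rw [this]
    field_simp
  have hRL := errF_RL hl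
  have hRL2 : Tendsto (fun y : ℝ => ∫ u, errF u * kf l (y - h - u)) atTop (𝓝 0) :=
    hRL.comp (tendsto_atTop_add_const_right _ (-h) tendsto_id)
  have hpos : 0 < ε / 4 * M := by positivity
  filter_upwards [hRL2.eventually (lt_mem_nhds (show -(ε / 4 * M) < 0 by linarith)),
    eventually_gt_atTop (2 * h)] with y h1 h2
  have h3 := psi_tauber_step hl hh h2
  set B := Chebyshev.psi (Real.exp y) * Real.exp (-y)
  have hB0 : 0 ≤ B := psi_exp_nonneg y
  have h5 : (1 - ε / 2) * M ≤ (Real.exp (2 * h) * B) * M := by rw [← hM] at h3; nlinarith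
  have h6 : 1 - ε / 2 ≤ Real.exp (2 * h) * B := le_of_mul_le_mul_right h5 hMpos
  have h7 : Real.exp (-(2 * h)) * (1 - ε / 2) ≤ B := by
    calc _ ≤ Real.exp (-(2 * h)) * (Real.exp (2 * h) * B) := by gcongr
      _ = B := by rw [← mul_assoc, ← Real.exp_add]; simp
  have h8 : Real.exp (-(2 * h)) ≤ 1 := by rw [Real.exp_le_one_iff]; linarith
  nlinarith [Real.exp_pos (-(2*h))]

/-- Prime number theorem, lower bound. -/
theorem pnt_lower {ε : ℝ} (hε : 0 < ε) :
    ∀ᶠ x : ℝ in atTop, (1 - ε) * (x / Real.log x) ≤ (Nat.primeCounting ⌊x⌋₊ : ℝ) := by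
  filter_upwards [Real.tendsto_log_atTop.eventually (psi_lower hε), eventually_gt_atTop 1]
    with x hx h1
  have hx0 : 0 < x := by linarith
  rw [Real.exp_neg, Real.exp_log hx0] at hx
  have hlog := Real.log_pos h1
  have h2 := Chebyshev.psi_le_primeCounting_mul_log' x
  rw [← mul_div_assoc, div_le_iff₀ hlog]
  refine le_trans ?_ h2
  rwa [← div_eq_mul_inv, le_div_iff₀ hx0] at hx

end PNT

section SelbergB
open ArithmeticFunction BoundingSieve
open scoped ArithmeticFunction.Moebius

lemma sum_moebius_interval {l m : ℕ} (hm : Squarefree m) (hl : l ∣ m) :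
    ∑ d ∈ m.divisors with l ∣ d, (μ d : ℝ) = if l = m then (μ l : ℝ) else 0 := by
  obtain ⟨e, rfl⟩ := hl
  have hle := hm
  rw [Nat.squarefree_mul_iff] at hle
  obtain ⟨hco, hsl, hse⟩ := hle
  have hl0 : l ≠ 0 := hsl.ne_zero
  have he0 : e ≠ 0 := hse.ne_zero
  have key : ∑ d ∈ (l * e).divisors with l ∣ d, (μ d : ℝ) = ∑ d ∈ e.divisors, (μ (l * d) : ℝ) := by
    symm
    refine Finset.sum_nbij (fun d => l * d) ?_ ?_ ?_ ?_
    · intro d hd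
      simp only [Nat.mem_divisors, Finset.mem_filter] at hd ⊢
      exact ⟨⟨Nat.mul_dvd_mul_left _ hd.1, hm.ne_zero⟩, Dvd.intro _ rfl⟩
    · intro a _ b _ h
      exact Nat.eq_of_mul_eq_mul_left (Nat.pos_of_ne_zero hl0) h
    · intro d hd
      simp only [Nat.mem_divisors, Finset.coe_filter, Set.mem_ofPred_eq] at hd
      obtain ⟨⟨h1, _⟩, ⟨k, rfl⟩⟩ := hd
      refine ⟨k, ?_, rfl⟩
      simp only [Finset.mem_coe, Nat.mem_divisors]
      exact ⟨Nat.dvd_of_mul_dvd_mul_left (Nat.pos_of_ne_zero hl0) h1, he0⟩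
    · intro d _; rfl
  rw [key]
  have h2 : ∀ d ∈ e.divisors, (μ (l * d) : ℝ) = (μ l : ℝ) * (μ d : ℝ) := by
    intro d hd
    have : l.Coprime d := Nat.Coprime.coprime_dvd_right (Nat.dvd_of_mem_divisors hd) hco
    rw [isMultiplicative_moebius.map_mul_of_coprime this]; push_cast; rfl
  rw [Finset.sum_congr rfl h2, ← Finset.mul_sum]
  have h3 : ∑ d ∈ e.divisors, (μ d : ℝ) = if e = 1 then 1 else 0 := by
    have := congrArg (fun f : ArithmeticFunction ℝ => f e) (coe_moebius_mul_coe_zeta (R := ℝ))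
    simp only [coe_mul_zeta_apply, one_apply] at this
    convert this using 1
    simp
  rw [h3]
  by_cases he : e = 1
  · simp [he]
  · have : l ≠ l * e := by
      intro h
      apply he
      exact Nat.eq_of_mul_eq_mul_left (Nat.pos_of_ne_zero hl0) (by omega)
    simp [he, this]

/-- The normalising sum of the Selberg sieve. -/
noncomputable def selS (s : BoundingSieve) (z : ℕ) : ℝ :=
  ∑ l ∈ s.prodPrimes.divisors with l ≤ z, s.selbergTerms l

/-- Selberg weights. -/
noncomputable def selW (s : BoundingSieve) (z : ℕ) (d : ℕ) : ℝ :=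
  (s.nu d)⁻¹ * μ d * (∑ l ∈ s.prodPrimes.divisors with (d ∣ l ∧ l ≤ z), s.selbergTerms l) / selS s z

lemma selS_pos (s : BoundingSieve) {z : ℕ} (hz : 1 ≤ z) : 0 < selS s z := by
  refine Finset.sum_pos ?_ ⟨1, ?_⟩
  · intro l hl
    exact selbergTerms_pos (Nat.dvd_of_mem_divisors (Finset.mem_filter.1 hl).1)
  · simp [hz, s.prodPrimes_squarefree.ne_zero]

lemma selW_one (s : BoundingSieve) {z : ℕ} (hz : 1 ≤ z) : selW s z 1 = 1 := by
  have h := selS_pos s hz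
  have : (∑ l ∈ s.prodPrimes.divisors with (1 ∣ l ∧ l ≤ z), s.selbergTerms l) = selS s z := by
    unfold selS; simp
  rw [selW, this, s.nu_mult.map_one]
  simp [h.ne']

lemma selW_abs_le (s : BoundingSieve) {z : ℕ} (hz : 1 ≤ z) {d : ℕ} (hd : d ∣ s.prodPrimes) :
    |selW s z d| ≤ if d ≤ z then s.selbergTerms d / s.nu d else 0 := by
  have hS := selS_pos s hz
  have hnu := nu_pos_of_dvd_prodPrimes hd
  have hg := selbergTerms_pos hd
  have hP0 : s.prodPrimes ≠ 0 := s.prodPrimes_squarefree.ne_zero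
  have hd0 : d ≠ 0 := ne_zero_of_dvd_ne_zero hP0 hd
  by_cases hdz : d ≤ z
  · rw [if_pos hdz]
    have hsum : (∑ l ∈ s.prodPrimes.divisors with (d ∣ l ∧ l ≤ z), s.selbergTerms l)
        ≤ s.selbergTerms d * selS s z := by
      have e1 : ∑ l ∈ s.prodPrimes.divisors with (d ∣ l ∧ l ≤ z), s.selbergTerms l
        = ∑ l ∈ s.prodPrimes.divisors with (d ∣ l ∧ l ≤ z),
          s.selbergTerms d * s.selbergTerms (l / d) := by
        refine Finset.sum_congr rfl fun l hl => ?_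
        simp only [Finset.mem_filter, Nat.mem_divisors] at hl
        obtain ⟨⟨h1, _⟩, ⟨k, rfl⟩, _⟩ := hl
        rw [Nat.mul_div_cancel_left _ (Nat.pos_of_ne_zero hd0)]
        have hsq : Squarefree (d * k) := s.prodPrimes_squarefree.squarefree_of_dvd h1
        exact selbergTerms_isMultiplicative.map_mul_of_coprime (Nat.coprime_of_squarefree_mul hsq)
      rw [e1, ← Finset.mul_sum]
      refine mul_le_mul_of_nonneg_left ?_ hg.le
      have hinj : Set.InjOn (fun l => l / d)
          (s.prodPrimes.divisors.filter (fun l => d ∣ l ∧ l ≤ z) : Set ℕ) := by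
        intro a ha b hb h
        simp only [Finset.coe_filter, Set.mem_ofPred_eq] at ha hb
        calc a = a / d * d := (Nat.div_mul_cancel ha.2.1).symm
          _ = b / d * d := by simp only at h; rw [h]
          _ = b := Nat.div_mul_cancel hb.2.1
      rw [← Finset.sum_image (f := fun l => s.selbergTerms l) hinj]
      refine Finset.sum_le_sum_of_subset_of_nonneg ?_ ?_
      · intro k hk
        simp only [Finset.mem_image, Finset.mem_filter, Nat.mem_divisors] at hk ⊢
        obtain ⟨l, ⟨⟨h1, h2⟩, h3, h4⟩, rfl⟩ := hk
        exact ⟨⟨(Nat.div_dvd_of_dvd h3).trans h1, h2⟩, (Nat.div_le_self _ _).trans h4⟩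
      · intro l hl _
        exact (selbergTerms_pos (Nat.dvd_of_mem_divisors (Finset.mem_filter.1 hl).1)).le
    have hsum0 : 0 ≤ (∑ l ∈ s.prodPrimes.divisors with (d ∣ l ∧ l ≤ z), s.selbergTerms l) := by
      refine Finset.sum_nonneg fun l hl => ?_
      exact (selbergTerms_pos (Nat.dvd_of_mem_divisors (Finset.mem_filter.1 hl).1)).le
    have hmu : |(μ d : ℝ)| ≤ 1 := by
      exact_mod_cast abs_moebius_le_one (n := d)
    rw [selW, abs_div, abs_mul, abs_mul, abs_of_pos hS, abs_of_pos (inv_pos.2 hnu),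
      abs_of_nonneg hsum0, div_le_iff₀ hS]
    calc _ ≤ (s.nu d)⁻¹ * 1 * (s.selbergTerms d * selS s z) := by gcongr
      _ = _ := by ring
  · rw [if_neg hdz]
    have : s.prodPrimes.divisors.filter (fun l => d ∣ l ∧ l ≤ z) = ∅ := by
      refine Finset.filter_eq_empty_iff.2 ?_
      intro l hl h
      have : d ≤ l := Nat.le_of_dvd (Nat.pos_of_mem_divisors hl) h.1
      omega
    rw [selW, this]; simp

lemma selW_diag (s : BoundingSieve) {z : ℕ} {l : ℕ} (hl : l ∣ s.prodPrimes) :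
    ∑ d ∈ s.prodPrimes.divisors with l ∣ d, s.nu d * selW s z d
      = if l ≤ z then μ l * s.selbergTerms l / selS s z else 0 := by
  have hP0 : s.prodPrimes ≠ 0 := s.prodPrimes_squarefree.ne_zero
  have e1 : ∀ d ∈ s.prodPrimes.divisors.filter (fun d => l ∣ d), s.nu d * selW s z d =
      ∑ m ∈ s.prodPrimes.divisors with m ≤ z, if d ∣ m then μ d * s.selbergTerms m / selS s z
        else 0 := by
    intro d hd
    have hnu := nu_ne_zero (Nat.dvd_of_mem_divisors (Finset.mem_filter.1 hd).1)
    rw [← Finset.sum_filter, Finset.filter_filter, selW]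
    rw [← Finset.sum_div, ← Finset.mul_sum]
    rw [← mul_div_assoc, ← mul_assoc, ← mul_assoc, mul_inv_cancel₀ hnu, one_mul]
    congr 3
    ext m; simp [and_comm]
  rw [Finset.sum_congr rfl e1, Finset.sum_comm]
  have e2 : ∀ m ∈ s.prodPrimes.divisors.filter (fun m => m ≤ z),
      (∑ d ∈ s.prodPrimes.divisors with l ∣ d, if d ∣ m then μ d * s.selbergTerms m / selS s z
        else 0) = if l = m then μ l * s.selbergTerms m / selS s z else 0 := by
    intro m hm
    simp only [Finset.mem_filter, Nat.mem_divisors] at hm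
    rw [← Finset.sum_filter, Finset.filter_filter]
    have hset : s.prodPrimes.divisors.filter (fun d => l ∣ d ∧ d ∣ m) =
        m.divisors.filter (fun d => l ∣ d) := by
      ext d
      simp only [Finset.mem_filter, Nat.mem_divisors]
      constructor
      · rintro ⟨⟨_, _⟩, h3, h4⟩
        exact ⟨⟨h4, ne_zero_of_dvd_ne_zero hP0 hm.1.1⟩, h3⟩
      · rintro ⟨⟨h1, h2⟩, h3⟩
        exact ⟨⟨h1.trans hm.1.1, hP0⟩, h3, h1⟩
    rw [hset, ← Finset.sum_div, ← Finset.sum_mul]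
    by_cases hlm : l ∣ m
    · rw [sum_moebius_interval (s.prodPrimes_squarefree.squarefree_of_dvd hm.1.1) hlm]
      split_ifs <;> simp
    · rw [if_neg (by rintro rfl; exact hlm dvd_rfl)]
      have : m.divisors.filter (fun d => l ∣ d) = ∅ := by
        refine Finset.filter_eq_empty_iff.2 fun d hd h => ?_
        exact hlm (h.trans (Nat.dvd_of_mem_divisors hd))
      rw [this]; simp
  rw [Finset.sum_congr rfl e2, Finset.sum_ite_eq]
  simp [hl, hP0]

/-- Selberg's upper bound sieve. -/
theorem selberg_bound (s : BoundingSieve) {z : ℕ} (hz : 1 ≤ z) :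
    s.siftedSum ≤ s.totalMass / selS s z +
      ∑ d1 ∈ s.prodPrimes.divisors with d1 ≤ z, ∑ d2 ∈ s.prodPrimes.divisors with d2 ≤ z,
        (s.selbergTerms d1 / s.nu d1) * (s.selbergTerms d2 / s.nu d2) * |s.rem (d1.lcm d2)| := by
  have hS := selS_pos s hz
  have hP0 : s.prodPrimes ≠ 0 := s.prodPrimes_squarefree.ne_zero
  refine (siftedSum_le_mainSum_errSum_of_upperMoebius _
    (upperMoebius_lambdaSquared _ (selW_one s hz))).trans ?_
  refine add_le_add (le_of_eq ?_) ?_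
  · rw [mainSum_lambdaSquared_eq_sum_mul_sum_sq, div_eq_mul_inv]
    congr 1
    have : ∀ l ∈ s.prodPrimes.divisors, (s.selbergTerms l)⁻¹ *
        (∑ d ∈ s.prodPrimes.divisors, if l ∣ d then s.nu d * selW s z d else 0) ^ 2
        = if l ≤ z then s.selbergTerms l / selS s z ^ 2 else 0 := by
      intro l hl
      have hl' := Nat.dvd_of_mem_divisors hl
      have h1 := selW_diag s (z := z) hl'
      rw [Finset.sum_filter] at h1
      have h2 : (∑ d ∈ s.prodPrimes.divisors, if l ∣ d then s.nu d * selW s z d else 0)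
        = if l ≤ z then μ l * s.selbergTerms l / selS s z else 0 := by
        rw [← h1]
      have hg := selbergTerms_pos hl'
      have hmu : (μ l : ℝ) ^ 2 = 1 := by
        have := moebius_sq_eq_one_of_squarefree (s.prodPrimes_squarefree.squarefree_of_dvd hl')
        exact_mod_cast this
      split_ifs at h2 ⊢ with h3
      · convert_to (s.selbergTerms l)⁻¹ * (μ l * s.selbergTerms l / selS s z) ^ 2 = _
        · rw [← h2]
        rw [div_pow, mul_pow, hmu]
        field_simp
      · rw [h2]; simp
    convert_to ∑ l ∈ s.prodPrimes.divisors, (if l ≤ z then s.selbergTerms l / selS s z ^ 2 else 0) = _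
    · refine Finset.sum_congr rfl fun l hl => ?_
      rw [← this l hl]
    rw [← Finset.sum_filter, ← Finset.sum_div]
    change selS s z / _ = _
    field_simp
  · set D := s.prodPrimes.divisors
    set w := selW s z
    have step1 : ∀ d ∈ D, |lambdaSquared w d| * |s.rem d| ≤
        ∑ d1 ∈ D, ∑ d2 ∈ D, if d = d1.lcm d2 then |w d1| * |w d2| * |s.rem d| else 0 := by
      intro d hd
      have hsub : d.divisors ⊆ D := Nat.divisors_subset_of_dvd hP0 (Nat.dvd_of_mem_divisors hd)
      have h1 : |lambdaSquared w d| ≤ ∑ d1 ∈ d.divisors, ∑ d2 ∈ d.divisors,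
          if d = d1.lcm d2 then |w d1| * |w d2| else 0 := by
        unfold lambdaSquared
        refine (Finset.abs_sum_le_sum_abs _ _).trans (Finset.sum_le_sum fun d1 _ => ?_)
        refine (Finset.abs_sum_le_sum_abs _ _).trans (Finset.sum_le_sum fun d2 _ => ?_)
        by_cases h : d = d1.lcm d2
        · rw [if_pos h, if_pos h, abs_mul]
        · rw [if_neg h, if_neg h, abs_zero]
      calc _ ≤ (∑ d1 ∈ d.divisors, ∑ d2 ∈ d.divisors,
          if d = d1.lcm d2 then |w d1| * |w d2| else 0) * |s.rem d| := by gcongr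
        _ = ∑ d1 ∈ d.divisors, ∑ d2 ∈ d.divisors,
          if d = d1.lcm d2 then |w d1| * |w d2| * |s.rem d| else 0 := by
            simp only [Finset.sum_mul, ite_mul, zero_mul]
        _ ≤ ∑ d1 ∈ d.divisors, ∑ d2 ∈ D,
          if d = d1.lcm d2 then |w d1| * |w d2| * |s.rem d| else 0 := by
            refine Finset.sum_le_sum fun d1 _ => ?_
            refine Finset.sum_le_sum_of_subset_of_nonneg hsub fun d2 _ _ => ?_
            split_ifs <;> positivity
        _ ≤ _ := by
            refine Finset.sum_le_sum_of_subset_of_nonneg hsub fun d1 _ _ => ?_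
            refine Finset.sum_nonneg fun d2 _ => ?_
            split_ifs <;> positivity
    have step2 : s.errSum (lambdaSquared w) ≤
        ∑ d1 ∈ D, ∑ d2 ∈ D, |w d1| * |w d2| * |s.rem (d1.lcm d2)| := by
      refine (Finset.sum_le_sum step1).trans (le_of_eq ?_)
      rw [Finset.sum_comm]
      refine Finset.sum_congr rfl fun d1 hd1 => ?_
      rw [Finset.sum_comm]
      refine Finset.sum_congr rfl fun d2 hd2 => ?_
      have hmem : d1.lcm d2 ∈ D := by
        rw [Nat.mem_divisors]
        exact ⟨Nat.lcm_dvd (Nat.dvd_of_mem_divisors hd1) (Nat.dvd_of_mem_divisors hd2), hP0⟩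
      rw [Finset.sum_ite_eq_of_mem' _ _ _ hmem]
    refine step2.trans ?_
    rw [Finset.sum_filter]
    refine Finset.sum_le_sum fun d1 hd1 => ?_
    have b1 := selW_abs_le s hz (Nat.dvd_of_mem_divisors hd1)
    by_cases h1 : d1 ≤ z
    · rw [if_pos h1] at b1 ⊢
      rw [Finset.sum_filter]
      refine Finset.sum_le_sum fun d2 hd2 => ?_
      have b2 := selW_abs_le s hz (Nat.dvd_of_mem_divisors hd2)
      by_cases h2 : d2 ≤ z
      · rw [if_pos h2] at b2 ⊢
        gcongr
        exact (abs_nonneg _).trans b1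
      · rw [if_neg h2] at b2 ⊢
        have : |w d2| = 0 := le_antisymm b2 (abs_nonneg _)
        rw [this]; simp
    · rw [if_neg h1] at b1 ⊢
      have : |w d1| = 0 := le_antisymm b1 (abs_nonneg _)
      simp [this]

end SelbergB

section SelbergB
open ArithmeticFunction BoundingSieve

lemma count_ap (N M v : ℕ) (hM : 0 < M) :
    |(((Finset.Ioc 0 N).filter (fun n => n ≡ v [MOD M])).card : ℝ) - N / M| ≤ 1 := by
  have h := Nat.Ioc_filter_modEq_card 0 N hM v
  set k := ((Finset.Ioc 0 N).filter (fun n => n ≡ v [MOD M])).card with hk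
  have h' : (k : ℤ) = max (⌊((N : ℚ) - v) / (M : ℚ)⌋ - ⌊(((0:ℕ) : ℚ) - v) / (M : ℚ)⌋) 0 := by
    rw [← h, hk]
  have hMq : (0 : ℚ) < M := by exact_mod_cast hM
  have f1 := Int.floor_le (((N : ℚ) - v) / (M : ℚ))
  have f2 := Int.lt_floor_add_one (((N : ℚ) - v) / (M : ℚ))
  have f3 := Int.floor_le ((((0:ℕ) : ℚ) - v) / (M : ℚ))
  have f4 := Int.lt_floor_add_one ((((0:ℕ) : ℚ) - v) / (M : ℚ))
  set A := ⌊((N : ℚ) - v) / (M : ℚ)⌋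
  set B := ⌊(((0:ℕ) : ℚ) - v) / (M : ℚ)⌋
  have e : ((N : ℚ) - v) / M - (((0:ℕ) : ℚ) - v) / M = N / M := by push_cast; ring
  have hAB : 0 ≤ A - B := by
    have : B ≤ A := Int.floor_le_floor (by gcongr; push_cast; exact Nat.cast_nonneg _)
    omega
  rw [max_eq_left hAB] at h'
  have hq : (k : ℚ) = A - B := by exact_mod_cast h'
  have : |(k : ℚ) - N / M| ≤ 1 := by
    rw [abs_le]; constructor <;> linarith
  have h9 : ((|(k : ℚ) - N / M| : ℚ) : ℝ) ≤ ((1 : ℚ) : ℝ) := by exact_mod_cast this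
  push_cast at h9
  exact h9

lemma card_div_sqfree {d : ℕ} (hd : Squarefree d) : d.divisors.card = 2 ^ d.primeFactors.card := by
  rw [Nat.card_divisors hd.ne_zero, Finset.prod_congr rfl (g := fun _ => 2)]
  · simp
  · intro p hp
    have := hd.natFactorization_le_one p
    have h2 : 0 < d.factorization p :=
      (Nat.prime_of_mem_primeFactors hp).factorization_pos_of_dvd hd.ne_zero
        (Nat.dvd_of_mem_primeFactors hp)
    omega

lemma dvd_mul_count {a d n : ℕ} (hd : d ≠ 0) :
    (if d ∣ n * (a * n + 1) then (1:ℝ) else 0) =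
      ∑ d1 ∈ d.divisors, if (d1 ∣ n ∧ d / d1 ∣ a * n + 1) then 1 else 0 := by
  have hco : n.Coprime (a * n + 1) := by
    simp
  have huniq : ∀ d1 ∈ d.divisors, (d1 ∣ n ∧ d / d1 ∣ a * n + 1) → d1 = d.gcd n := by
    intro d1 h1 ⟨h2, h3⟩
    have hd1 := Nat.dvd_of_mem_divisors h1
    have hc : (d / d1).Coprime n := (Nat.Coprime.coprime_dvd_right h3 hco).symm
    conv_rhs => rw [← Nat.div_mul_cancel hd1]
    rw [Nat.Coprime.gcd_mul_left_cancel _ hc]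
    exact (Nat.gcd_eq_left h2).symm
  by_cases h : d ∣ n * (a * n + 1)
  · rw [if_pos h, Finset.sum_eq_single (d.gcd n), if_pos]
    · refine ⟨Nat.gcd_dvd_right _ _, ?_⟩
      have hg : 0 < d.gcd n := Nat.gcd_pos_of_pos_left _ (Nat.pos_of_ne_zero hd)
      have h5 : (d / d.gcd n) ∣ (n / d.gcd n) * (a * n + 1) := by
        have := Nat.div_dvd_div (Nat.dvd_trans (Nat.gcd_dvd_left d n) dvd_rfl) h
        rwa [Nat.mul_div_right_comm (Nat.gcd_dvd_right d n)] at this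
      exact (Nat.coprime_div_gcd_div_gcd hg).dvd_of_dvd_mul_left h5
    · intro d1 h1 h2
      rw [if_neg]
      intro h3; exact h2 (huniq d1 h1 h3)
    · intro h1
      exact absurd (Nat.mem_divisors.2 ⟨Nat.gcd_dvd_left _ _, hd⟩) h1
  · rw [if_neg h]
    symm
    refine Finset.sum_eq_zero fun d1 h1 => ?_
    rw [if_neg]
    rintro ⟨h2, h3⟩
    apply h
    rw [← Nat.mul_div_cancel' (Nat.dvd_of_mem_divisors h1)]
    exact Nat.mul_dvd_mul h2 h3

lemma class_exists {a W b d1 d2 : ℕ} (hW : 0 < W) (hd1 : 0 < d1) (hd2 : 0 < d2)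
    (h12 : d1.Coprime d2) (h1W : (d1 * d2).Coprime W)
    (h2a : d2.Coprime a) :
    ∃ v, ∀ n, (n ≡ b [MOD W] ∧ d1 ∣ n ∧ d2 ∣ a * n + 1) ↔ n ≡ v [MOD (W * (d1 * d2))] := by
  obtain ⟨u, hu⟩ : ∃ u : ℕ, a * u + 1 ≡ 0 [MOD d2] := by
    have : NeZero d2 := ⟨hd2.ne'⟩
    have hunit : IsUnit (a : ZMod d2) := (ZMod.isUnit_iff_coprime a d2).2 h2a.symm
    obtain ⟨c, hc⟩ := hunit.exists_right_inv
    refine ⟨(-c).val, ?_⟩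
    rw [← ZMod.natCast_eq_natCast_iff]
    push_cast
    rw [ZMod.natCast_zmod_val]
    rw [mul_neg, hc]; ring
  obtain ⟨v1, hv1⟩ := Nat.chineseRemainder h12 0 u
  obtain ⟨v, hv⟩ := Nat.chineseRemainder h1W.symm b v1
  refine ⟨v, fun n => ?_⟩
  rw [← Nat.modEq_and_modEq_iff_modEq_mul h1W.symm, ← Nat.modEq_and_modEq_iff_modEq_mul h12]
  have hv3 : v ≡ v1 [MOD d1] := hv.2.of_mul_right d2
  have hv4 : v ≡ v1 [MOD d2] := hv.2.of_mul_left d1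
  have A : n ≡ b [MOD W] ↔ n ≡ v [MOD W] :=
    ⟨fun h => h.trans hv.1.symm, fun h => h.trans hv.1⟩
  have B : d1 ∣ n ↔ n ≡ v [MOD d1] := by
    rw [← Nat.modEq_zero_iff_dvd]
    exact ⟨fun h => h.trans (hv3.trans hv1.1).symm, fun h => h.trans (hv3.trans hv1.1)⟩
  have C : d2 ∣ a * n + 1 ↔ n ≡ v [MOD d2] := by
    rw [← Nat.modEq_zero_iff_dvd]
    have hvu : v ≡ u [MOD d2] := hv4.trans hv1.2
    constructor
    · intro h
      have h5 : a * n + 1 ≡ a * u + 1 [MOD d2] := h.trans hu.symm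
      have h6 : a * n ≡ a * u [MOD d2] := Nat.ModEq.add_right_cancel' 1 h5
      have h7 : n ≡ u [MOD d2] := Nat.ModEq.cancel_left_of_coprime h2a h6
      exact h7.trans hvu.symm
    · intro h
      exact ((((h.trans hvu)).mul_left a).add_right 1).trans hu
  rw [A, B, C]

/-- the set being sifted (before the polynomial is applied). -/
noncomputable def baseSet (W b N : ℕ) : Finset ℕ := (Finset.Ioc 0 N).filter (fun n => n ≡ b [MOD W])

lemma base_count {a W b N d : ℕ} (hW : 0 < W) (hd : Squarefree d) (hdW : d.Coprime (a * W)) :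
    |(∑ n ∈ baseSet W b N, if d ∣ n * (a * n + 1) then (1:ℝ) else 0)
      - (d.divisors.card : ℝ) / d * ((N : ℝ) / W)| ≤ d.divisors.card := by
  simp_rw [dvd_mul_count (a := a) hd.ne_zero]
  rw [Finset.sum_comm]
  have e : (d.divisors.card : ℝ) / d * ((N : ℝ) / W) = ∑ d1 ∈ d.divisors, (N : ℝ) / (W * d : ℕ) := by
    rw [Finset.sum_const, nsmul_eq_mul]; push_cast
    field_simp
  rw [e, ← Finset.sum_sub_distrib]
  refine (Finset.abs_sum_le_sum_abs _ _).trans ?_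
  rw [show (d.divisors.card : ℝ) = ∑ d1 ∈ d.divisors, (1 : ℝ) by simp]
  refine Finset.sum_le_sum fun d1 hd1 => ?_
  have h1 := Nat.dvd_of_mem_divisors hd1
  obtain ⟨d2, rfl⟩ := h1
  have hd10 : 0 < d1 := Nat.pos_of_mem_divisors hd1
  have hd20 : 0 < d2 := Nat.pos_of_ne_zero (right_ne_zero_of_mul hd.ne_zero)
  rw [Nat.mul_div_cancel_left _ hd10]
  have h2a : d2.Coprime a :=
    (hdW.coprime_dvd_left (Dvd.intro_left d1 rfl)).coprime_dvd_right (Dvd.intro _ rfl)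
  obtain ⟨v, hv⟩ := class_exists (b := b) hW hd10 hd20 (Nat.coprime_of_squarefree_mul hd)
    (hdW.coprime_dvd_right (Dvd.intro_left a rfl)) h2a
  rw [← Finset.sum_filter, baseSet, Finset.filter_filter, Finset.sum_const, nsmul_eq_mul, mul_one]
  have : (Finset.Ioc 0 N).filter (fun n => n ≡ b [MOD W] ∧ d1 ∣ n ∧ d2 ∣ a * n + 1)
    = (Finset.Ioc 0 N).filter (fun n => n ≡ v [MOD (W * (d1 * d2))]) := by
    refine Finset.filter_congr fun n _ => hv n
  rw [this]
  exact count_ap _ _ _ (by positivity)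

/-- primes to sieve by. -/
noncomputable def sievePrimes (Q z : ℕ) : Finset ℕ :=
  (Finset.range (z + 1)).filter (fun p => p.Prime ∧ ¬ p ∣ Q)

lemma sievePrimes_prime {Q z p : ℕ} (h : p ∈ sievePrimes Q z) : p.Prime :=
  (Finset.mem_filter.1 h).2.1

lemma sieveProd_sqfree (Q z : ℕ) : Squarefree (∏ p ∈ sievePrimes Q z, p) := by
  refine Finset.squarefree_prod_of_pairwise_isCoprime ?_ ?_
  · intro p hp q hq hpq
    simp only [Function.onFun]
    rw [← Nat.coprime_iff_isRelPrime]
    exact (Nat.coprime_primes (sievePrimes_prime hp) (sievePrimes_prime hq)).2 hpq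
  · intro p hp
    exact (sievePrimes_prime hp).prime.squarefree

lemma prime_dvd_sieveProd {Q z p : ℕ} (hp : p.Prime) :
    p ∣ (∏ p ∈ sievePrimes Q z, p) ↔ p ≤ z ∧ ¬ p ∣ Q := by
  rw [hp.prime.dvd_finsetProd_iff]
  constructor
  · rintro ⟨q, hq, h⟩
    have : p = q := (Nat.prime_dvd_prime_iff_eq hp (sievePrimes_prime hq)).1 h
    subst this
    simp only [sievePrimes, Finset.mem_filter, Finset.mem_range] at hq
    exact ⟨by omega, hq.2.2⟩
  · rintro ⟨h1, h2⟩
    exact ⟨p, by simp only [sievePrimes, Finset.mem_filter, Finset.mem_range]; exact ⟨by omega, hp, h2⟩, dvd_rfl⟩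

lemma dvd_sieveProd_iff {Q z d : ℕ} (hdz : d ≤ z) (hd0 : d ≠ 0) :
    d ∣ (∏ p ∈ sievePrimes Q z, p) ↔ Squarefree d ∧ d.Coprime Q := by
  constructor
  · intro h
    refine ⟨(sieveProd_sqfree Q z).squarefree_of_dvd h, ?_⟩
    refine Nat.Coprime.symm (Nat.coprime_of_dvd fun p hp h1 h2 => ?_)
    exact ((prime_dvd_sieveProd hp).1 (h2.trans h)).2 h1
  · rintro ⟨h1, h2⟩
    rw [← Nat.prod_primeFactors_of_squarefree h1]
    refine Finset.prod_dvd_prod_of_subset _ _ _ fun p hp => ?_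
    have hpp := Nat.prime_of_mem_primeFactors hp
    have hpd := Nat.dvd_of_mem_primeFactors hp
    have : p ≤ d := Nat.le_of_dvd (Nat.pos_of_ne_zero hd0) hpd
    simp only [sievePrimes, Finset.mem_filter, Finset.mem_range]
    refine ⟨by omega, hpp, fun h3 => ?_⟩
    exact hpp.one_lt.ne' (Nat.eq_one_of_dvd_coprimes h2 hpd h3)

/-- the Selberg sum -/
noncomputable def Ssum (Q z : ℕ) : ℝ :=
  ∑ l ∈ (Finset.Icc 1 z).filter (fun l => Squarefree l ∧ l.Coprime Q),
    ∏ p ∈ l.primeFactors, 2 / ((p : ℝ) - 2)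

/-- The twin sieve. -/
noncomputable def twinSieve (a W b N z : ℕ)
    (h3 : ∀ p : ℕ, p.Prime → ¬ p ∣ W → 3 ≤ p) : BoundingSieve where
  support := (baseSet W b N).image (fun n => n * (a * n + 1))
  prodPrimes := ∏ p ∈ sievePrimes (a * W) z, p
  prodPrimes_squarefree := sieveProd_sqfree _ _
  weights := fun _ => 1
  weights_nonneg := fun _ => zero_le_one
  totalMass := (N : ℝ) / W
  nu := ArithmeticFunction.prodPrimeFactors (fun p => 2 / (p : ℝ))
  nu_mult := IsMultiplicative.prodPrimeFactors _
  nu_pos_of_prime := by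
    intro p hp _
    rw [prodPrimeFactors_apply hp.ne_zero, hp.primeFactors, Finset.prod_singleton]
    have := hp.pos
    positivity
  nu_lt_one_of_prime := by
    intro p hp h
    rw [prodPrimeFactors_apply hp.ne_zero, hp.primeFactors, Finset.prod_singleton]
    have h4 := h3 p hp fun h5 => ((prime_dvd_sieveProd hp).1 h).2 (h5.trans (Dvd.intro_left a rfl))
    have : (3 : ℝ) ≤ p := by exact_mod_cast h4
    rw [div_lt_one (by linarith)]; linarith

lemma poly_inj (a : ℕ) : Function.Injective (fun n : ℕ => n * (a * n + 1)) := by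
  have : StrictMono (fun n : ℕ => n * (a * n + 1)) := by
    refine strictMono_nat_of_lt_succ fun n => ?_
    nlinarith [Nat.zero_le (a * n), Nat.zero_le a, Nat.zero_le n]
  exact this.injective

theorem twin_bound {a W b N z : ℕ} {η : ℝ} (ha : 0 < a) (hW : 0 < W) (hz : 1 ≤ z) (hη : 0 < η)
    (h3 : ∀ p : ℕ, p.Prime → ¬ p ∣ W → 3 ≤ p ∧ 6 ≤ (p : ℝ) ^ η) :
    (((baseSet W b N).filter
      (fun n => ∀ p : ℕ, p.Prime → p ≤ z → ¬ p ∣ a * W → ¬ p ∣ n * (a * n + 1))).card : ℝ)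
      ≤ (N : ℝ) / W / Ssum (a * W) z + ((z : ℝ) ^ (1 + η)) ^ 2 := by
  set s := twinSieve a W b N z (fun p hp h => (h3 p hp h).1) with hs
  have hP0 : s.prodPrimes ≠ 0 := s.prodPrimes_squarefree.ne_zero
  have hnu : ∀ d, d ∣ s.prodPrimes → s.nu d = (d.divisors.card : ℝ) / d := by
    intro d hd
    have hsq := s.prodPrimes_squarefree.squarefree_of_dvd hd
    change ArithmeticFunction.prodPrimeFactors (fun p => 2 / (p : ℝ)) d = _
    rw [prodPrimeFactors_apply hsq.ne_zero, Finset.prod_div_distrib, card_div_sqfree hsq]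
    rw [← Nat.cast_prod, Nat.prod_primeFactors_of_squarefree hsq]
    simp
  have hnup : ∀ p, p.Prime → s.nu p = 2 / (p : ℝ) := by
    intro p hp
    change ArithmeticFunction.prodPrimeFactors (fun p => 2 / (p : ℝ)) p = _
    rw [prodPrimeFactors_apply hp.ne_zero, hp.primeFactors, Finset.prod_singleton]
  have hpP : ∀ p : ℕ, p.Prime → p ∣ s.prodPrimes → (3 ≤ (p : ℝ)) ∧ 6 ≤ (p : ℝ) ^ η := by
    intro p hp h
    have := h3 p hp fun h5 => ((prime_dvd_sieveProd hp).1 h).2 (h5.trans (Dvd.intro_left a rfl))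
    exact ⟨by exact_mod_cast this.1, this.2⟩
  have hsift : s.siftedSum = (((baseSet W b N).filter
      (fun n => ∀ p : ℕ, p.Prime → p ≤ z → ¬ p ∣ a * W → ¬ p ∣ n * (a * n + 1))).card : ℝ) := by
    rw [BoundingSieve.siftedSum]
    have hsupp : s.support = (baseSet W b N).image (fun n => n * (a * n + 1)) := rfl
    have hw : ∀ n, s.weights n = 1 := fun _ => rfl
    simp only [hsupp, hw]
    rw [Finset.sum_image (fun _ _ _ _ h => poly_inj a h), ← Finset.sum_filter, Finset.sum_const,
      nsmul_eq_mul, mul_one]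
    congr 2
    refine Finset.filter_congr fun n _ => ?_
    constructor
    · intro h p hp h1 h2 h4
      have h5 : p ∣ s.prodPrimes := (prime_dvd_sieveProd hp).2 ⟨h1, h2⟩
      exact hp.one_lt.ne' (Nat.eq_one_of_dvd_coprimes h h5 h4)
    · intro h
      refine Nat.coprime_of_dvd fun p hp h1 h2 => ?_
      have h5 := (prime_dvd_sieveProd hp).1 h1
      exact h p hp h5.1 h5.2 h2
  have hrem : ∀ d, d ∣ s.prodPrimes → |s.rem d| ≤ d.divisors.card := by
    intro d hd
    have hsq := s.prodPrimes_squarefree.squarefree_of_dvd hd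
    have hco : d.Coprime (a * W) := by
      refine Nat.Coprime.symm (Nat.coprime_of_dvd fun p hp h1 h2 => ?_)
      exact ((prime_dvd_sieveProd hp).1 (h2.trans hd)).2 h1
    have := base_count (b := b) (N := N) hW hsq hco
    rw [BoundingSieve.rem, hnu d hd]
    have htm : s.totalMass = (N : ℝ) / W := rfl
    rw [htm]
    convert this using 3
    rw [BoundingSieve.multSum]
    have hsupp : s.support = (baseSet W b N).image (fun n => n * (a * n + 1)) := rfl
    have hw : ∀ n, s.weights n = 1 := fun _ => rfl
    simp only [hsupp, hw]
    rw [Finset.sum_image (fun _ _ _ _ h => poly_inj a h)]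
  have hS : selS s z = Ssum (a * W) z := by
    unfold selS Ssum
    have hset : s.prodPrimes.divisors.filter (fun l => l ≤ z) =
        (Finset.Icc 1 z).filter (fun l => Squarefree l ∧ l.Coprime (a * W)) := by
      ext d
      simp only [Finset.mem_filter, Nat.mem_divisors, Finset.mem_Icc]
      constructor
      · rintro ⟨⟨h1, h2⟩, h4⟩
        have hd0 := ne_zero_of_dvd_ne_zero h2 h1
        exact ⟨⟨Nat.pos_of_ne_zero hd0, h4⟩, (dvd_sieveProd_iff h4 hd0).1 h1⟩
      · rintro ⟨⟨h1, h2⟩, h4⟩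
        exact ⟨⟨(dvd_sieveProd_iff h2 (by omega)).2 h4, hP0⟩, h2⟩
    rw [hset]
    refine Finset.sum_congr rfl fun l hl => ?_
    rw [← hset] at hl
    have hlP := Nat.dvd_of_mem_divisors (Finset.mem_filter.1 hl).1
    rw [selbergTerms_apply, ← prod_primeFactors_nu hlP, ← Finset.prod_mul_distrib]
    refine Finset.prod_congr rfl fun p hp => ?_
    have hpp := Nat.prime_of_mem_primeFactors hp
    have := (hpP p hpp ((Nat.dvd_of_mem_primeFactors hp).trans hlP)).1
    rw [hnup p hpp]
    have h5 : (p : ℝ) - 2 ≠ 0 := by linarith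
    have h6 : (p : ℝ) ≠ 0 := by linarith
    have h7 : 1 - 2 / (p : ℝ) = (p - 2) / p := by field_simp
    rw [h7, inv_div]
    field_simp
  have hgn : ∀ d, d ∣ s.prodPrimes → 0 ≤ s.selbergTerms d / s.nu d ∧
      s.selbergTerms d / s.nu d * d.divisors.card ≤ (d : ℝ) ^ η := by
    intro d hd
    have hsq := s.prodPrimes_squarefree.squarefree_of_dvd hd
    have hg := selbergTerms_pos hd
    have hn := nu_pos_of_dvd_prodPrimes hd
    refine ⟨by positivity, ?_⟩
    rw [selbergTerms_apply, mul_div_right_comm, div_self hn.ne', one_mul,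
      card_div_sqfree hsq]
    push_cast
    rw [← Finset.prod_const, ← Finset.prod_mul_distrib]
    conv_rhs => rw [← Nat.prod_primeFactors_of_squarefree hsq]
    push_cast
    rw [← Real.finsetProd_rpow _ _ (fun _ _ => Nat.cast_nonneg _)]
    refine Finset.prod_le_prod ?_ ?_
    · intro p hp
      have hpp := Nat.prime_of_mem_primeFactors hp
      have := (hpP p hpp ((Nat.dvd_of_mem_primeFactors hp).trans hd)).1
      rw [hnup p hpp]
      have : 2 / (p : ℝ) ≤ 1 := by rw [div_le_one (by linarith)]; linarith
      have := inv_nonneg.2 (sub_nonneg.2 this)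
      positivity
    · intro p hp
      have hpp := Nat.prime_of_mem_primeFactors hp
      have := (hpP p hpp ((Nat.dvd_of_mem_primeFactors hp).trans hd))
      rw [hnup p hpp]
      refine le_trans ?_ this.2
      have h8 : 2 / (p : ℝ) ≤ 2 / 3 := by gcongr; exact this.1
      have : (1 - 2 / (p : ℝ))⁻¹ ≤ 3 := by
        rw [inv_le_comm₀ (by linarith) (by norm_num)]; linarith
      linarith
  have hmain := selberg_bound s hz
  rw [hsift, hS] at hmain
  refine hmain.trans (add_le_add le_rfl ?_)
  have hbound : ∑ d ∈ s.prodPrimes.divisors with d ≤ z,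
      s.selbergTerms d / s.nu d * d.divisors.card ≤ (z : ℝ) ^ (1 + η) := by
    have hcard : (s.prodPrimes.divisors.filter (fun d => d ≤ z)).card ≤ z := by
      calc _ ≤ (Finset.Icc 1 z).card := by
            refine Finset.card_le_card fun d hd => ?_
            simp only [Finset.mem_filter, Finset.mem_Icc] at hd ⊢
            exact ⟨Nat.pos_of_mem_divisors hd.1, hd.2⟩
        _ = z := by simp
    calc _ ≤ ∑ d ∈ s.prodPrimes.divisors with d ≤ z, (z : ℝ) ^ η := by
          refine Finset.sum_le_sum fun d hd => ?_
          simp only [Finset.mem_filter] at hd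
          refine (hgn d (Nat.dvd_of_mem_divisors hd.1)).2.trans ?_
          have : (d : ℝ) ≤ z := by exact_mod_cast hd.2
          gcongr
      _ ≤ (z : ℝ) * (z : ℝ) ^ η := by
          rw [Finset.sum_const, nsmul_eq_mul]; gcongr
      _ = _ := by
          rw [Real.rpow_add (by exact_mod_cast hz), Real.rpow_one]
  have hnn : 0 ≤ ∑ d ∈ s.prodPrimes.divisors with d ≤ z,
      s.selbergTerms d / s.nu d * d.divisors.card := by
    refine Finset.sum_nonneg fun d hd => ?_
    have := (hgn d (Nat.dvd_of_mem_divisors (Finset.mem_filter.1 hd).1)).1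
    positivity
  refine le_trans ?_ (pow_le_pow_left₀ hnn hbound 2)
  rw [sq, Finset.sum_mul_sum]
  refine Finset.sum_le_sum fun d1 h1 => Finset.sum_le_sum fun d2 h2 => ?_
  have h1' := Nat.dvd_of_mem_divisors (Finset.mem_filter.1 h1).1
  have h2' := Nat.dvd_of_mem_divisors (Finset.mem_filter.1 h2).1
  have hlcm := Nat.lcm_dvd h1' h2'
  have hr := hrem _ hlcm
  have hcard : (d1.lcm d2).divisors.card ≤ d1.divisors.card * d2.divisors.card := by
    rw [card_div_sqfree (s.prodPrimes_squarefree.squarefree_of_dvd hlcm),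
      card_div_sqfree (s.prodPrimes_squarefree.squarefree_of_dvd h1'),
      card_div_sqfree (s.prodPrimes_squarefree.squarefree_of_dvd h2'), ← pow_add]
    refine Nat.pow_le_pow_right (by norm_num) ?_
    refine le_trans (Finset.card_le_card ?_) (Finset.card_union_le _ _)
    intro p hp
    have hpp := Nat.prime_of_mem_primeFactors hp
    have hdv := (Nat.dvd_of_mem_primeFactors hp).trans (Nat.lcm_dvd_mul d1 d2)
    rw [Finset.mem_union, Nat.mem_primeFactors_of_ne_zero (ne_zero_of_dvd_ne_zero hP0 h1'),
      Nat.mem_primeFactors_of_ne_zero (ne_zero_of_dvd_ne_zero hP0 h2')]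
    exact ((Nat.Prime.dvd_mul hpp).1 hdv).imp (fun h => ⟨hpp, h⟩) (fun h => ⟨hpp, h⟩)
  have hcard' : ((d1.lcm d2).divisors.card : ℝ) ≤ d1.divisors.card * d2.divisors.card := by
    exact_mod_cast hcard
  calc _ ≤ s.selbergTerms d1 / s.nu d1 * (s.selbergTerms d2 / s.nu d2) *
        (d1.divisors.card * d2.divisors.card) := by
        have a1 := (hgn d1 h1').1
        have a2 := (hgn d2 h2').1
        exact mul_le_mul_of_nonneg_left (hr.trans hcard') (mul_nonneg a1 a2)
    _ = _ := by ring

end SelbergB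

section SelbergB
open ArithmeticFunction

lemma geom2_le (x : ℝ) (h0 : 0 ≤ x) (h1 : x < 1) (K : ℕ) :
    ∑ j ∈ Finset.range K, ((j : ℝ) + 1) * x ^ j ≤ ((1 - x) ^ 2)⁻¹ := by
  have key : (∑ j ∈ Finset.range K, ((j : ℝ) + 1) * x ^ j) * (1 - x) ^ 2
      = 1 - x ^ K * (1 + K * (1 - x)) := by
    induction K with
    | zero => simp
    | succ k ih =>
      rw [Finset.sum_range_succ, add_mul, ih]; push_cast; ring
  rw [← one_div, le_div_iff₀ (by have : 0 < 1 - x := by linarith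
                                 positivity), key]
  have : 0 ≤ x ^ K * (1 + K * (1 - x)) := by
    have : 0 ≤ 1 - x := by linarith
    positivity
  linarith

lemma sum_prod_le_prod_sum (A U : Finset ℕ) (J : ℕ → Finset ℕ) (f : ℕ → ℕ → ℝ)
    (hf : ∀ p ∈ U, ∀ j, 0 ≤ f p j) (v : ℕ → ℕ → ℕ)
    (hv : ∀ n ∈ A, ∀ p ∈ U, v n p ∈ J p)
    (hinj : ∀ n ∈ A, ∀ m ∈ A, (∀ p ∈ U, v n p = v m p) → n = m) :
    ∑ n ∈ A, ∏ p ∈ U, f p (v n p) ≤ ∏ p ∈ U, ∑ j ∈ J p, f p j := by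
  rw [Finset.prod_sum]
  have hI : Set.InjOn (fun n => (fun (p : ℕ) (_ : p ∈ U) => v n p)) (A : Set ℕ) := by
    intro n hn m hm h
    refine hinj n hn m hm fun p hp => ?_
    exact congrFun (congrFun h p) hp
  calc ∑ n ∈ A, ∏ p ∈ U, f p (v n p)
      = ∑ n ∈ A, ∏ q ∈ U.attach, f q.1 (v n q.1) := by
        refine Finset.sum_congr rfl fun n _ => ?_
        exact (Finset.prod_attach U (fun p => f p (v n p))).symm
    _ = ∑ w ∈ A.image (fun n => (fun (p : ℕ) (_ : p ∈ U) => v n p)),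
          ∏ q ∈ U.attach, f q.1 (w q.1 q.2) := by
        rw [Finset.sum_image hI]
    _ ≤ _ := by
        refine Finset.sum_le_sum_of_subset_of_nonneg ?_ ?_
        · intro w hw
          rw [Finset.mem_image] at hw
          obtain ⟨n, hn, rfl⟩ := hw
          rw [Finset.mem_pi]
          exact fun p hp => hv n hn p hp
        · intro w _ _
          exact Finset.prod_nonneg fun q _ => hf q.1 q.2 _

lemma tau_div_eq {n : ℕ} (hn : n ≠ 0) {U : Finset ℕ} (hU : n.primeFactors ⊆ U) :
    (n.divisors.card : ℝ) / n
      = ∏ p ∈ U, ((n.factorization p : ℝ) + 1) * (1 / (p : ℝ)) ^ n.factorization p := by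
  rw [← Finset.prod_subset hU]
  · rw [Finset.prod_mul_distrib, Nat.card_divisors hn]
    push_cast
    rw [div_eq_mul_inv]
    congr 1
    conv_lhs => rw [← Nat.prod_factorization_pow_eq_self hn]
    rw [Finsupp.prod, Nat.support_factorization]
    push_cast
    rw [← Finset.prod_inv_distrib]
    exact Finset.prod_congr rfl fun p _ => by rw [one_div, inv_pow]
  · intro p _ hp
    have : n.factorization p = 0 := by
      rw [← Finsupp.notMem_support_iff, Nat.support_factorization]; exact hp
    simp [this]

/-- The Euler-type factor. -/
noncomputable def Rfac (Q : ℕ) : ℝ := ∏ p ∈ Q.primeFactors, ((1 - 1 / (p : ℝ)) ^ 2)⁻¹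

lemma prime_inv_lt {p : ℕ} (hp : p.Prime) : 0 ≤ 1 / (p : ℝ) ∧ 1 / (p : ℝ) ≤ 1 / 2 := by
  have : (2 : ℝ) ≤ p := by exact_mod_cast hp.two_le
  exact ⟨by positivity, by gcongr⟩

lemma local_bound {p : ℕ} (hp : 3 ≤ p) (K : ℕ) :
    ∑ j ∈ Finset.Icc 1 K, ((j : ℝ) + 1) * (1 / (p : ℝ)) ^ j ≤ 2 / ((p : ℝ) - 2) := by
  have hp3 : (3 : ℝ) ≤ p := by exact_mod_cast hp
  have h1 : 1 / (p : ℝ) < 1 := by rw [div_lt_one (by linarith)]; linarith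
  have h := geom2_le (1 / (p : ℝ)) (by positivity) h1 (K + 1)
  rw [Finset.range_eq_Ico, Finset.sum_eq_sum_Ico_succ_bot (by omega)] at h
  have e : Finset.Ico (0 + 1) (K + 1) = Finset.Icc 1 K := by ext; simp
  rw [e] at h
  simp only [pow_zero, Nat.cast_zero] at h
  have h2 : ((1 - 1 / (p : ℝ)) ^ 2)⁻¹ - 1 ≤ 2 / ((p : ℝ) - 2) := by
    have e2 : 1 - 1 / (p : ℝ) = (p - 1) / p := by field_simp
    rw [e2, div_pow, inv_div, sub_le_iff_le_add, div_le_iff₀ (by nlinarith)]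
    have : 0 < (p : ℝ) - 2 := by linarith
    rw [div_add_one this.ne', div_mul_eq_mul_div, le_div_iff₀ this]
    nlinarith
  linarith

lemma tau_sum_le (Q z : ℕ) (hQ : Q ≠ 0) (h3 : ∀ p : ℕ, p.Prime → ¬ p ∣ Q → 3 ≤ p) :
    ∑ n ∈ Finset.Icc 1 z, (n.divisors.card : ℝ) / n ≤ Rfac Q * Ssum Q z := by
  set L : ℕ → ℕ := fun n => ∏ p ∈ n.primeFactors with ¬ p ∣ Q, p with hL
  have hLsub : ∀ n : ℕ, ∀ p ∈ n.primeFactors.filter (fun p => ¬ p ∣ Q), p.Prime := fun n p hp =>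
    Nat.prime_of_mem_primeFactors (Finset.mem_filter.1 hp).1
  have hLpf : ∀ n, (L n).primeFactors = n.primeFactors.filter (fun p => ¬ p ∣ Q) := fun n =>
    Nat.primeFactors_prod (hLsub n)
  have hLsq : ∀ n, Squarefree (L n) := by
    intro n
    refine Finset.squarefree_prod_of_pairwise_isCoprime ?_ ?_
    · intro p hp q hq hpq
      simp only [Function.onFun]
      rw [← Nat.coprime_iff_isRelPrime]
      exact (Nat.coprime_primes (hLsub n p hp) (hLsub n q hq)).2 hpq
    · intro p hp
      exact (hLsub n p hp).prime.squarefree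
  have hLdvd : ∀ n, L n ∣ n := fun n =>
    (Finset.prod_dvd_prod_of_subset _ _ _ (Finset.filter_subset _ _)).trans
      (Nat.prod_primeFactors_dvd n)
  have hmaps : ∀ n ∈ Finset.Icc 1 z,
      L n ∈ (Finset.Icc 1 z).filter (fun l => Squarefree l ∧ l.Coprime Q) := by
    intro n hn
    rw [Finset.mem_Icc] at hn
    have := Nat.le_of_dvd (by omega) (hLdvd n)
    have h0 := Nat.pos_of_ne_zero (hLsq n).ne_zero
    simp only [Finset.mem_filter, Finset.mem_Icc]
    refine ⟨⟨h0, by omega⟩, hLsq n, Nat.coprime_of_dvd fun p hp h1 h2 => ?_⟩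
    have : p ∈ (L n).primeFactors := Nat.mem_primeFactors.2 ⟨hp, h1, h0.ne'⟩
    rw [hLpf, Finset.mem_filter] at this
    exact this.2 h2
  rw [← Finset.sum_fiberwise_of_maps_to hmaps, Ssum, Finset.mul_sum]
  refine Finset.sum_le_sum fun l hl => ?_
  simp only [Finset.mem_filter, Finset.mem_Icc] at hl
  obtain ⟨⟨hl1, hlz⟩, hlsq, hlQ⟩ := hl
  have hdisj : Disjoint Q.primeFactors l.primeFactors := hlQ.symm.disjoint_primeFactors
  set U := Q.primeFactors ∪ l.primeFactors with hU
  have hUp : ∀ p ∈ U, p.Prime := by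
    intro p hp
    rcases Finset.mem_union.1 hp with h | h <;> exact Nat.prime_of_mem_primeFactors h
  have hA : ∀ n ∈ (Finset.Icc 1 z).filter (fun n => L n = l), n ≠ 0 ∧ n ≤ z ∧ n.primeFactors ⊆ U ∧
      l.primeFactors ⊆ n.primeFactors := by
    intro n hn
    simp only [Finset.mem_filter, Finset.mem_Icc] at hn
    obtain ⟨⟨h1, h2⟩, h4⟩ := hn
    refine ⟨by omega, h2, ?_, ?_⟩
    · intro p hp
      by_cases hpQ : p ∣ Q
      · exact Finset.mem_union_left _ (Nat.mem_primeFactors.2 ⟨Nat.prime_of_mem_primeFactors hp, hpQ, hQ⟩)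
      · refine Finset.mem_union_right _ ?_
        rw [← h4, hLpf, Finset.mem_filter]; exact ⟨hp, hpQ⟩
    · rw [← h4, hLpf]; exact Finset.filter_subset _ _
  set f : ℕ → ℕ → ℝ := fun p j => ((j : ℝ) + 1) * (1 / (p : ℝ)) ^ j with hf
  set J : ℕ → Finset ℕ := fun p => if p ∣ Q then Finset.range (z + 1) else Finset.Icc 1 z with hJ
  have hfac : ∀ n ≠ 0, n ≤ z → ∀ p, n.factorization p ≤ z := fun n h1 h2 p =>
    ((Nat.factorization_lt p h1).le).trans h2
  have main := sum_prod_le_prod_sum ((Finset.Icc 1 z).filter (fun n => L n = l)) U J f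
    (fun p hp j => by simp only [hf]; positivity) (fun n p => n.factorization p)
    (by
      intro n hn p hp
      obtain ⟨h1, h2, h4, h5⟩ := hA n hn
      have h6 := hfac n h1 h2 p
      simp only [hJ]
      split_ifs with h7
      · rw [Finset.mem_range]; omega
      · rw [Finset.mem_Icc]
        refine ⟨?_, h6⟩
        have h8 : p ∈ l.primeFactors := by
          rcases Finset.mem_union.1 hp with h | h
          · exact absurd (Nat.dvd_of_mem_primeFactors h) h7
          · exact h
        exact (hUp p hp).factorization_pos_of_dvd h1 (Nat.dvd_of_mem_primeFactors (h5 h8)))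
    (by
      intro n hn m hm h
      obtain ⟨h1, h2, h4, h5⟩ := hA n hn
      obtain ⟨k1, k2, k4, k5⟩ := hA m hm
      refine Nat.eq_of_factorization_eq h1 k1 fun p => ?_
      by_cases hp : p ∈ U
      · exact h p hp
      · have e1 : n.factorization p = 0 := by
          rw [← Finsupp.notMem_support_iff, Nat.support_factorization]; exact fun h => hp (h4 h)
        have e2 : m.factorization p = 0 := by
          rw [← Finsupp.notMem_support_iff, Nat.support_factorization]; exact fun h => hp (k4 h)
        rw [e1, e2])
  have e1 : ∑ n ∈ (Finset.Icc 1 z).filter (fun n => L n = l), (n.divisors.card : ℝ) / n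
      = ∑ n ∈ (Finset.Icc 1 z).filter (fun n => L n = l), ∏ p ∈ U, f p (n.factorization p) := by
    refine Finset.sum_congr rfl fun n hn => ?_
    obtain ⟨h1, h2, h4, h5⟩ := hA n hn
    exact tau_div_eq h1 h4
  rw [e1]
  refine main.trans ?_
  rw [hU, Finset.prod_union hdisj, Rfac]
  have hnn : ∀ p, 0 ≤ ∑ j ∈ J p, f p j := fun p => Finset.sum_nonneg fun j _ => by
    simp only [hf]; positivity
  refine mul_le_mul (Finset.prod_le_prod (fun p _ => hnn p) ?_)
    (Finset.prod_le_prod (fun p _ => hnn p) ?_) (Finset.prod_nonneg fun p _ => hnn p)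
    (Finset.prod_nonneg fun p _ => by positivity)
  · intro p hp
    have hpp := Nat.prime_of_mem_primeFactors hp
    have := prime_inv_lt hpp
    simp only [hJ, if_pos (Nat.dvd_of_mem_primeFactors hp)]
    exact geom2_le _ this.1 (by linarith) _
  · intro p hp
    have hpp := Nat.prime_of_mem_primeFactors hp
    have hpQ : ¬ p ∣ Q := fun h => hpp.one_lt.ne'
      (Nat.eq_one_of_dvd_coprimes hlQ (Nat.dvd_of_mem_primeFactors hp) h)
    simp only [hJ, if_neg hpQ]
    exact local_bound (h3 p hpp hpQ) z

lemma tau_sum_ge (z : ℕ) :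
    1 / 2 * Real.log (z + 1) ^ 2 ≤ ∑ n ∈ Finset.Icc 1 z, (n.divisors.card : ℝ) / n := by
  have h1 : ∑ n ∈ Finset.Icc 1 z, (n.divisors.card : ℝ) / n =
      ∑ d ∈ Finset.Icc 1 z, ∑ m ∈ Finset.Icc 1 (z / d), 1 / ((d : ℝ) * m) := by
    have : ∀ n ∈ Finset.Icc 1 z, (n.divisors.card : ℝ) / n
        = ∑ d ∈ n.divisors, (1 : ℝ) / n := by
      intro n _; simp [div_eq_mul_inv]
    rw [Finset.sum_congr rfl this, Finset.sum_sigma', Finset.sum_sigma']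
    refine Finset.sum_bij' (fun x _ => ⟨x.2, x.1 / x.2⟩) (fun x _ => ⟨x.1 * x.2, x.1⟩) ?_ ?_ ?_ ?_ ?_
    · rintro ⟨n, d⟩ h
      simp only [Finset.mem_sigma, Finset.mem_Icc, Nat.mem_divisors] at h ⊢
      have hd0 : 0 < d := Nat.pos_of_dvd_of_pos h.2.1 (by omega)
      have := Nat.le_of_dvd (by omega) h.2.1
      exact ⟨⟨hd0, by omega⟩, Nat.div_pos this hd0, Nat.div_le_div_right h.1.2⟩
    · rintro ⟨d, m⟩ h
      simp only [Finset.mem_sigma, Finset.mem_Icc, Nat.mem_divisors] at h ⊢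
      have h5 : d * m ≤ z := by
        calc d * m ≤ d * (z / d) := Nat.mul_le_mul_left _ h.2.2
          _ ≤ z := Nat.mul_div_le z d
      have h6 : 0 < d * m := Nat.mul_pos (by omega) (by omega)
      exact ⟨⟨h6, h5⟩, Dvd.intro _ rfl, h6.ne'⟩
    · rintro ⟨n, d⟩ h
      simp only [Finset.mem_sigma, Finset.mem_Icc, Nat.mem_divisors] at h
      simp [Nat.mul_div_cancel' h.2.1]
    · rintro ⟨d, m⟩ h
      simp only [Finset.mem_sigma, Finset.mem_Icc] at h
      simp [Nat.mul_div_cancel_left m (show 0 < d by omega)]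
    · rintro ⟨n, d⟩ h
      simp only [Finset.mem_sigma, Finset.mem_Icc, Nat.mem_divisors] at h
      simp only
      rw [← Nat.cast_mul, Nat.mul_div_cancel' h.2.1]
  have h2 : ∀ d ∈ Finset.Icc 1 z, 1 / 2 * (Real.log ((z + 1) / d) ^ 2
      - Real.log ((z + 1) / (d + 1 : ℕ)) ^ 2) ≤ ∑ m ∈ Finset.Icc 1 (z / d), 1 / ((d : ℝ) * m) := by
    intro d hd
    rw [Finset.mem_Icc] at hd
    have hd0 : (0 : ℝ) < d := by exact_mod_cast hd.1
    have hz : (d : ℝ) ≤ z := by exact_mod_cast hd.2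
    have hh : ∑ m ∈ Finset.Icc 1 (z / d), 1 / ((d : ℝ) * m) = 1 / d * harmonic (z / d) := by
      rw [harmonic_eq_sum_Icc]
      push_cast
      rw [Finset.mul_sum]
      refine Finset.sum_congr rfl fun m _ => ?_
      rw [one_div, mul_inv, one_div]
    have hlog : Real.log ((z + 1) / d) ≤ harmonic (z / d) := by
      refine le_trans (Real.log_le_log (by positivity) ?_) (log_add_one_le_harmonic (z / d))
      rw [div_le_iff₀ hd0]
      have : z + 1 ≤ (z / d + 1) * d := Nat.lt_mul_of_div_lt (Nat.lt_succ_self _) hd.1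
      exact_mod_cast this
    rw [hh]
    have hu : Real.log ((z + 1) / d) - Real.log ((z + 1) / (d + 1 : ℕ)) ≤ 1 / d := by
      rw [← Real.log_div (by positivity) (by positivity)]
      have e : (((z : ℝ) + 1) / d) / ((z + 1) / (d + 1 : ℕ)) = 1 + 1 / d := by
        push_cast; field_simp
      rw [e]
      have := Real.log_le_sub_one_of_pos (show (0:ℝ) < 1 + 1 / d by positivity)
      linarith
    have hv : 0 ≤ Real.log ((z + 1) / (d + 1 : ℕ)) := by
      refine Real.log_nonneg ?_
      rw [one_le_div (by positivity)]; push_cast; linarith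
    have huv : Real.log ((z + 1) / (d + 1 : ℕ)) ≤ Real.log ((z + 1) / d) := by
      refine Real.log_le_log (by positivity) ?_
      gcongr; push_cast; linarith
    set u := Real.log ((z + 1) / d)
    set v := Real.log ((z + 1) / (d + 1 : ℕ))
    calc 1 / 2 * (u ^ 2 - v ^ 2) = (u - v) * ((u + v) / 2) := by ring
      _ ≤ (1 / d) * u := by
        refine mul_le_mul hu (by linarith) (by linarith) (by positivity)
      _ ≤ _ := by gcongr
  rw [h1]
  refine le_trans (le_of_eq ?_) (Finset.sum_le_sum h2)
  rw [← Finset.mul_sum]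
  congr 1
  have e : Finset.Icc 1 z = Finset.Ico 1 (z + 1) := by ext; simp
  rw [e, Finset.sum_Ico_eq_sum_range]
  have tele := Finset.sum_range_sub' (fun d : ℕ => Real.log (((z:ℝ) + 1) / (1 + d : ℕ)) ^ 2) z
  simp only [Nat.add_sub_cancel]
  refine Eq.trans ?_ (tele.symm.trans ?_)
  · have : ((z:ℝ) + 1) / (1 + z : ℕ) = 1 := by
      push_cast; rw [add_comm]; exact div_self (by positivity)
    rw [this]; simp
  · refine Finset.sum_congr rfl fun k _ => ?_
    simp only [Nat.add_assoc]

theorem Ssum_lower (Q z : ℕ) (hQ : Q ≠ 0) (h3 : ∀ p : ℕ, p.Prime → ¬ p ∣ Q → 3 ≤ p) :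
    1 / 2 * Real.log (z + 1) ^ 2 ≤ Rfac Q * Ssum Q z :=
  (tau_sum_ge z).trans (tau_sum_le Q z hQ h3)

end SelbergB

section AverD

/-- weight in the sum over `a`. -/
noncomputable def phiw (x : ℝ) (a : ℕ) : ℝ := 1 / ((a : ℝ) * Real.log (x / a) ^ 2)

lemma phiw_nonneg (x : ℝ) (a : ℕ) : 0 ≤ phiw x a := by unfold phiw; positivity

lemma neg_log_ge {e : ℝ} (h0 : 0 ≤ e) (h1 : e < 1) : e + e ^ 2 / 2 ≤ -Real.log (1 - e) := by
  have h := Real.hasSum_pow_div_log_of_abs_lt_one (x := e) (by rw [abs_of_nonneg h0]; exact h1)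
  have := sum_le_hasSum (Finset.range 2) (fun n _ => by positivity) h
  rw [Finset.sum_range_succ, Finset.sum_range_one] at this
  norm_num at this
  linarith

lemma phiw_le_diff {x : ℝ} {a h : ℕ} (hx : 0 < x) (hh : 0 < h) (ha : 0 < a)
    (hu : 3 ≤ Real.log (x / (a + h : ℕ))) :
    phiw x (a + h) ≤ (1 / Real.log (x / (a + h : ℕ)) - 1 / Real.log (x / a)) / h := by
  have ha' : (0:ℝ) < a := by exact_mod_cast ha
  have hh' : (0:ℝ) < h := by exact_mod_cast hh
  have hA : (0:ℝ) < (a + h : ℕ) := by positivity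
  set A : ℝ := ((a + h : ℕ) : ℝ) with hAdef
  set u := Real.log (x / A) with hudef
  set e := (h : ℝ) / A with he
  have he0 : 0 < e := by positivity
  have hAa : A = a + h := by rw [hAdef]; push_cast; ring
  have he1 : e < 1 := by rw [he, div_lt_one hA, hAa]; linarith
  have hv : Real.log (x / a) = u + -Real.log (1 - e) := by
    have : 1 - e = a / A := by rw [he, hAa]; field_simp; ring
    rw [this, hudef, ← Real.log_inv, ← Real.log_mul (by positivity) (by positivity)]
    congr 1; field_simp
  have hd := neg_log_ge he0.le he1
  set d := -Real.log (1 - e)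
  rw [hv]
  have hd0 : 0 < d := by nlinarith
  have hu0 : 0 < u := by linarith
  unfold phiw
  rw [← hAdef, ← hudef, le_div_iff₀ hh']
  have e1 : 1 / (A * u ^ 2) * h = e / u ^ 2 := by rw [he]; field_simp
  have e2 : 1 / u - 1 / (u + d) = d / (u * (u + d)) := by field_simp; ring
  rw [e1, e2, div_le_div_iff₀ (by positivity) (by positivity)]
  have key : e * (u + d) ≤ d * u := by
    have h5 : (e + e ^ 2 / 2) * (u - e) ≤ d * (u - e) :=
      mul_le_mul_of_nonneg_right hd (by linarith)
    have h6 : 0 ≤ e ^ 2 * (u - 2 - e) := mul_nonneg (by positivity) (by linarith)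
    nlinarith
  calc e * (u * (u + d)) = (e * (u + d)) * u := by ring
    _ ≤ (d * u) * u := by gcongr
    _ = _ := by ring

lemma ap_sum {x c : ℝ} {Y h D v : ℕ} (hx : 0 < x) (hc : 0 < c) (hcx : 3 ≤ c * Real.log x)
    (hY : ∀ a : ℕ, 1 ≤ a → a ≤ Y → c * Real.log x ≤ Real.log (x / a))
    (hh : 0 < h) (hD : 0 < D) (hc1 : c < 1) (A : Finset ℕ)
    (hA : ∀ a ∈ A, a ≤ Y ∧ D ≤ a ∧ a ≡ v [MOD h]) :
    ∑ a ∈ A, phiw x a ≤ 1 / (D * (c * Real.log x) ^ 2) + (1 / c - 1) / Real.log x / h := by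
  have hlog : 0 < Real.log x := by
    by_contra hn
    have : c * Real.log x ≤ 0 := mul_nonpos_of_nonneg_of_nonpos hc.le (not_lt.1 hn)
    linarith
  have hc' : 0 ≤ 1 / c - 1 := by
    have : 1 ≤ 1 / c := by rw [le_div_iff₀ hc]; linarith
    linarith
  rcases A.eq_empty_or_nonempty with rfl | hne
  · simp only [Finset.sum_empty]; positivity
  set v0 := A.min' hne with hv0
  have hv0A : v0 ∈ A := A.min'_mem hne
  obtain ⟨h1, h2, h3⟩ := hA v0 hv0A
  set J := (Y - v0) / h with hJ
  have hJle : v0 + J * h ≤ Y := by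
    have := Nat.div_mul_le_self (Y - v0) h
    rw [← hJ] at this
    omega
  have hsub : A ⊆ (Finset.range (J + 1)).image (fun j => v0 + j * h) := by
    intro a ha
    obtain ⟨k1, k2, k3⟩ := hA a ha
    have hle : v0 ≤ a := A.min'_le a ha
    have hm : v0 ≡ a [MOD h] := h3.trans k3.symm
    have hdv : h ∣ a - v0 := (Nat.modEq_iff_dvd' hle).1 hm
    rw [Finset.mem_image]
    refine ⟨(a - v0) / h, ?_, ?_⟩
    · rw [Finset.mem_range, hJ]
      have : (a - v0) / h ≤ (Y - v0) / h := Nat.div_le_div_right (by omega)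
      omega
    · rw [Nat.div_mul_cancel hdv]; omega
  have hinj : Function.Injective (fun j => v0 + j * h) := by
    intro i j hij
    have : i * h = j * h := by simpa using hij
    exact Nat.eq_of_mul_eq_mul_right hh this
  have hv0pos : 0 < v0 := by omega
  have hv0r : (0 : ℝ) < v0 := by exact_mod_cast hv0pos
  calc ∑ a ∈ A, phiw x a ≤ ∑ a ∈ (Finset.range (J + 1)).image (fun j => v0 + j * h), phiw x a :=
        Finset.sum_le_sum_of_subset_of_nonneg hsub fun a _ _ => phiw_nonneg x a
    _ = ∑ j ∈ Finset.range (J + 1), phiw x (v0 + j * h) :=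
        Finset.sum_image (fun _ _ _ _ h => hinj h)
    _ = ∑ j ∈ Finset.range J, phiw x (v0 + (j + 1) * h) + phiw x v0 := by
        rw [Finset.sum_range_succ']; simp
    _ ≤ ∑ j ∈ Finset.range J, (1 / Real.log (x / (v0 + (j + 1) * h : ℕ))
          - 1 / Real.log (x / (v0 + j * h : ℕ))) / h + phiw x v0 := by
        refine add_le_add (Finset.sum_le_sum fun j hj => ?_) le_rfl
        rw [Finset.mem_range] at hj
        have hle : v0 + (j + 1) * h ≤ Y := by
          refine le_trans ?_ hJle
          gcongr
          omega
        have e : v0 + (j + 1) * h = (v0 + j * h) + h := by ring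
        have := hY (v0 + (j + 1) * h) (by omega) hle
        rw [e] at this ⊢
        exact phiw_le_diff hx hh (by omega) (hcx.trans this)
    _ = (1 / Real.log (x / (v0 + J * h : ℕ)) - 1 / Real.log (x / v0)) / h + phiw x v0 := by
        rw [← Finset.sum_div,
          Finset.sum_range_sub (fun j => 1 / Real.log (x / (v0 + j * h : ℕ)))]
        simp
    _ ≤ (1 / (c * Real.log x) - 1 / Real.log x) / h + 1 / (D * (c * Real.log x) ^ 2) := by
        have g1 := hY (v0 + J * h) (by omega) hJle
        have g2 := hY v0 hv0pos h1
        have g3 : Real.log (x / v0) ≤ Real.log x := by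
          refine Real.log_le_log (by positivity) ?_
          refine div_le_self hx.le ?_
          exact_mod_cast hv0pos
        have hDv : (D : ℝ) ≤ v0 := by exact_mod_cast h2
        have hD' : (0:ℝ) < D := by exact_mod_cast hD
        unfold phiw
        have g4 : 0 < Real.log (x / v0) := by linarith
        gcongr
    _ = _ := by
        rw [add_comm]
        congr 2
        field_simp

/-- the part of the Euler factor at primes not dividing `W`. -/
noncomputable def Ffac (W a : ℕ) : ℝ :=
  ∏ p ∈ a.primeFactors with ¬ p ∣ W, ((1 - 1 / (p : ℝ)) ^ 2)⁻¹

lemma Ffac_nonneg (W a : ℕ) : 0 ≤ Ffac W a := Finset.prod_nonneg fun p _ => by positivity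

lemma Rfac_mul {W a : ℕ} (ha : a ≠ 0) (hW : W ≠ 0) : Rfac (a * W) = Rfac W * Ffac W a := by
  unfold Rfac Ffac
  have e : (a * W).primeFactors = W.primeFactors ∪ a.primeFactors.filter (fun p => ¬ p ∣ W) := by
    rw [Nat.primeFactors_mul ha hW]
    ext p
    simp only [Finset.mem_union, Finset.mem_filter, Nat.mem_primeFactors]
    tauto
  rw [e, Finset.prod_union]
  rw [Finset.disjoint_left]
  intro p h1 h2
  exact (Finset.mem_filter.1 h2).2 (Nat.dvd_of_mem_primeFactors h1)

lemma Rfac_totient {W : ℕ} (_hW : W ≠ 0) : Rfac W * (W.totient : ℝ) ^ 2 = (W : ℝ) ^ 2 := by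
  have h := Nat.totient_eq_mul_prod_factors W
  have h' : (W.totient : ℝ) = W * ∏ p ∈ W.primeFactors, (1 - (p : ℝ)⁻¹) := by
    have := congrArg (fun q : ℚ => (q : ℝ)) h
    push_cast at this
    exact this
  have hne : ∏ p ∈ W.primeFactors, (1 - (p : ℝ)⁻¹) ≠ 0 := by
    refine Finset.prod_ne_zero_iff.2 fun p hp => ?_
    have := prime_inv_lt (Nat.prime_of_mem_primeFactors hp)
    rw [one_div] at this
    linarith
  rw [h', Rfac, Finset.prod_inv_distrib, Finset.prod_pow]
  simp only [one_div]
  rw [mul_pow, mul_comm, mul_assoc, mul_inv_cancel₀ (pow_ne_zero 2 hne), mul_one]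

lemma kfac_le {p : ℕ} (hp : 3 ≤ p) : ((1 - 1 / (p : ℝ)) ^ 2)⁻¹ ≤ 1 + 4 / (p : ℝ) := by
  have hp3 : (3 : ℝ) ≤ p := by exact_mod_cast hp
  have e2 : 1 - 1 / (p : ℝ) = (p - 1) / p := by field_simp
  rw [e2, div_pow, inv_div, div_le_iff₀ (by nlinarith)]
  have e3 : (1 + 4 / (p : ℝ)) = (p + 4) / p := by field_simp
  rw [e3, div_mul_eq_mul_div, le_div_iff₀ (by linarith)]
  nlinarith [mul_nonneg (show (0:ℝ) ≤ p by linarith) (show (0:ℝ) ≤ p - 3 by linarith)]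

lemma class_sum {x c : ℝ} {Y W r w : ℕ} (hx : 0 < x) (hc : 0 < c) (hcx : 3 ≤ c * Real.log x)
    (hY : ∀ a : ℕ, 1 ≤ a → a ≤ Y → c * Real.log x ≤ Real.log (x / a))
    (hW : 0 < W) (hc1 : c < 1) (hw : 2 ≤ w) (hpW : ∀ p : ℕ, p.Prime → ¬ p ∣ W → w < p) :
    ∑ a ∈ (Finset.Icc 1 Y).filter (fun a => a ≡ r [MOD W]), Ffac W a * phiw x a ≤
      Real.exp (4 / w) * (1 / (c * Real.log x) ^ 2 + (1 / c - 1) / Real.log x / W) := by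
  set P := (Finset.Ioc w Y).filter (fun p => p.Prime ∧ ¬ p ∣ W) with hP
  set B := 1 / (c * Real.log x) ^ 2 + (1 / c - 1) / Real.log x / W with hB
  have hlog : 0 < Real.log x := by
    by_contra hn
    have : c * Real.log x ≤ 0 := mul_nonpos_of_nonneg_of_nonpos hc.le (not_lt.1 hn)
    linarith
  have hB0 : 0 ≤ B := by
    have : 1 ≤ 1 / c := by rw [le_div_iff₀ hc]; linarith
    have : 0 ≤ 1 / c - 1 := by linarith
    positivity
  have hPp : ∀ p ∈ P, p.Prime ∧ ¬ p ∣ W := fun p hp => (Finset.mem_filter.1 hp).2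
  have hF : ∀ a ∈ (Finset.Icc 1 Y).filter (fun a => a ≡ r [MOD W]), Ffac W a ≤
      ∑ s ∈ P.powerset, if (∏ p ∈ s, p) ∣ a then ∏ p ∈ s, 4 / (p : ℝ) else 0 := by
    intro a ha
    simp only [Finset.mem_filter, Finset.mem_Icc] at ha
    have hsub : a.primeFactors.filter (fun p => ¬ p ∣ W) ⊆ P := by
      intro p hp
      simp only [Finset.mem_filter, hP, Finset.mem_Ioc] at hp ⊢
      have hpp := Nat.prime_of_mem_primeFactors hp.1
      have := Nat.le_of_dvd (by omega) (Nat.dvd_of_mem_primeFactors hp.1)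
      exact ⟨⟨hpW p hpp hp.2, by omega⟩, hpp, hp.2⟩
    calc Ffac W a ≤ ∏ p ∈ a.primeFactors with ¬ p ∣ W, (1 + 4 / (p : ℝ)) := by
          refine Finset.prod_le_prod (fun p _ => by positivity) fun p hp => kfac_le ?_
          have := hpW p (hPp p (hsub hp)).1 (hPp p (hsub hp)).2
          omega
      _ = ∑ s ∈ (a.primeFactors.filter (fun p => ¬ p ∣ W)).powerset, ∏ p ∈ s, 4 / (p : ℝ) := by
          rw [Finset.prod_one_add]
      _ = ∑ s ∈ (a.primeFactors.filter (fun p => ¬ p ∣ W)).powerset,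
            if (∏ p ∈ s, p) ∣ a then ∏ p ∈ s, 4 / (p : ℝ) else 0 := by
          refine Finset.sum_congr rfl fun s hs => ?_
          rw [if_pos]
          rw [Finset.mem_powerset] at hs
          exact (Finset.prod_dvd_prod_of_subset _ _ _
            (hs.trans (Finset.filter_subset _ _))).trans (Nat.prod_primeFactors_dvd a)
      _ ≤ _ := by
          refine Finset.sum_le_sum_of_subset_of_nonneg (Finset.powerset_mono.2 hsub) ?_
          intro s _ _
          split_ifs
          · exact Finset.prod_nonneg fun p _ => by positivity
          · exact le_rfl
  calc _ ≤ ∑ a ∈ (Finset.Icc 1 Y).filter (fun a => a ≡ r [MOD W]), ∑ s ∈ P.powerset,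
        (if (∏ p ∈ s, p) ∣ a then ∏ p ∈ s, 4 / (p : ℝ) else 0) * phiw x a := by
        refine Finset.sum_le_sum fun a ha => ?_
        rw [← Finset.sum_mul]
        exact mul_le_mul_of_nonneg_right (hF a ha) (phiw_nonneg x a)
    _ = ∑ s ∈ P.powerset, (∏ p ∈ s, 4 / (p : ℝ)) *
        ∑ a ∈ ((Finset.Icc 1 Y).filter (fun a => a ≡ r [MOD W])).filter
          (fun a => (∏ p ∈ s, p) ∣ a), phiw x a := by
        rw [Finset.sum_comm]
        refine Finset.sum_congr rfl fun s _ => ?_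
        rw [Finset.mul_sum, Finset.sum_filter (p := fun a => (∏ p ∈ s, p) ∣ a)]
        refine Finset.sum_congr rfl fun a _ => ?_
        split_ifs <;> simp
    _ ≤ ∑ s ∈ P.powerset, (∏ p ∈ s, 4 / (p : ℝ)) * ((∏ p ∈ s, 1 / (p : ℝ)) * B) := by
        refine Finset.sum_le_sum fun s hs => ?_
        rw [Finset.mem_powerset] at hs
        refine mul_le_mul_of_nonneg_left ?_ (Finset.prod_nonneg fun p _ => by positivity)
        set D := ∏ p ∈ s, p with hD
        have hD0 : 0 < D := Finset.prod_pos fun p hp => (hPp p (hs hp)).1.pos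
        have hcop : W.Coprime D := by
          refine Nat.Coprime.prod_right fun p hp => ?_
          exact ((Nat.Prime.coprime_iff_not_dvd (hPp p (hs hp)).1).2 (hPp p (hs hp)).2).symm
        obtain ⟨v, hv⟩ := Nat.chineseRemainder hcop r 0
        have := ap_sum (v := v) (D := D) (h := W * D) hx hc hcx hY (by positivity) hD0 hc1
          (((Finset.Icc 1 Y).filter (fun a => a ≡ r [MOD W])).filter (fun a => D ∣ a))
          (by
            intro a ha
            simp only [Finset.mem_filter, Finset.mem_Icc] at ha
            refine ⟨ha.1.1.2, Nat.le_of_dvd (by omega) ha.2, ?_⟩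
            rw [← Nat.modEq_and_modEq_iff_modEq_mul hcop]
            exact ⟨ha.1.2.trans hv.1.symm, ((Nat.modEq_zero_iff_dvd).2 ha.2).trans hv.2.symm⟩)
        refine this.trans (le_of_eq ?_)
        have e : ∏ p ∈ s, 1 / (p : ℝ) = 1 / D := by
          rw [Finset.prod_div_distrib, hD]; push_cast; simp
        rw [e, hB]
        push_cast
        field_simp
    _ = (∏ p ∈ P, (1 + 4 / (p : ℝ) * (1 / p))) * B := by
        rw [Finset.prod_one_add, Finset.sum_mul]
        refine Finset.sum_congr rfl fun s _ => ?_
        rw [Finset.prod_mul_distrib]; ring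
    _ ≤ Real.exp (4 / w) * B := by
        refine mul_le_mul_of_nonneg_right ?_ hB0
        calc _ ≤ ∏ p ∈ P, Real.exp (4 / (p : ℝ) * (1 / p)) := by
              refine Finset.prod_le_prod (fun p _ => by positivity) fun p _ => ?_
              rw [add_comm]; exact Real.add_one_le_exp _
          _ = Real.exp (∑ p ∈ P, 4 / (p : ℝ) * (1 / p)) := by rw [Real.exp_sum]
          _ ≤ _ := by
              refine Real.exp_le_exp.2 ?_
              rcases le_or_gt Y w with h | h
              · have : P = ∅ := by rw [hP, Finset.Ioc_eq_empty (by omega)]; rfl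
                rw [this, Finset.sum_empty]; positivity
              calc _ ≤ ∑ p ∈ Finset.Ioc w Y, 4 / (p : ℝ) * (1 / p) :=
                    Finset.sum_le_sum_of_subset_of_nonneg (Finset.filter_subset _ _)
                      fun p _ _ => by positivity
                _ = 4 * ∑ p ∈ Finset.Ioc w Y, ((p : ℝ) ^ 2)⁻¹ := by
                    rw [Finset.mul_sum]
                    refine Finset.sum_congr rfl fun p _ => ?_
                    rw [div_mul_div_comm, mul_one, ← sq, div_eq_mul_inv]
                _ ≤ 4 * ((w : ℝ)⁻¹ - (Y : ℝ)⁻¹) := by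
                    gcongr
                    exact sum_Ioc_inv_sq_le_sub (by omega) h.le
                _ ≤ 4 / w := by
                    have : (0:ℝ) ≤ (Y : ℝ)⁻¹ := by positivity
                    rw [div_eq_mul_inv]; linarith

/-- admissible residues -/
noncomputable def resB (W a : ℕ) : Finset ℕ :=
  (Finset.range W).filter (fun b => b.Coprime W ∧ (a * b + 1).Coprime W)

lemma resB_mod (W a : ℕ) : resB W (a % W) = resB W a := by
  unfold resB
  refine Finset.filter_congr fun b _ => ?_
  have : (a % W * b + 1) ≡ (a * b + 1) [MOD W] := ((Nat.mod_modEq a W).mul_right b).add_right 1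
  rw [Nat.Coprime, Nat.Coprime, Nat.Coprime, this.gcd_eq]

lemma resB_total (W : ℕ) (hW : 0 < W) :
    ∑ r ∈ Finset.range W, (resB W r).card ≤ W.totient ^ 2 := by
  unfold resB
  simp_rw [Finset.card_filter]
  rw [Finset.sum_comm]
  have key : ∀ b ∈ Finset.range W, (∑ r ∈ Finset.range W,
      if b.Coprime W ∧ (r * b + 1).Coprime W then 1 else 0) ≤
      if W.Coprime b then W.totient else 0 := by
    intro b _
    by_cases hb : b.Coprime W
    · rw [if_pos hb.symm, ← Finset.card_filter, Nat.totient_eq_card_coprime]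
      refine Finset.card_le_card_of_injOn (fun r => (r * b + 1) % W) ?_ ?_
      · intro r hr
        simp only [Finset.coe_filter, Set.mem_ofPred_eq, Finset.mem_range] at hr ⊢
        refine ⟨Nat.mod_lt _ hW, ?_⟩
        rw [Nat.coprime_comm, Nat.Coprime, (Nat.mod_modEq _ W).gcd_eq]
        exact hr.2.2
      · intro r hr r' hr' h
        simp only [Finset.coe_filter, Set.mem_ofPred_eq, Finset.mem_range] at hr hr'
        have h1 : r * b + 1 ≡ r' * b + 1 [MOD W] := h
        have h2 : r * b ≡ r' * b [MOD W] := Nat.ModEq.add_right_cancel' 1 h1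
        have h3 : r ≡ r' [MOD W] := Nat.ModEq.cancel_right_of_coprime hb.symm h2
        exact Nat.ModEq.eq_of_lt_of_lt h3 hr.1 hr'.1
    · refine le_trans (le_of_eq ?_) (Nat.zero_le _)
      refine Finset.sum_eq_zero fun r _ => ?_
      rw [if_neg]; tauto
  refine (Finset.sum_le_sum key).trans (le_of_eq ?_)
  rw [← Finset.sum_filter, Finset.sum_const, smul_eq_mul, sq]
  congr 1

theorem aver_bound {x c : ℝ} {Y W w : ℕ} (hx : 0 < x) (hc : 0 < c) (hcx : 3 ≤ c * Real.log x)
    (hY : ∀ a : ℕ, 1 ≤ a → a ≤ Y → c * Real.log x ≤ Real.log (x / a))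
    (hW : 0 < W) (hc1 : c < 1) (hw : 2 ≤ w) (hpW : ∀ p : ℕ, p.Prime → ¬ p ∣ W → w < p) :
    ∑ a ∈ Finset.Icc 1 Y, ((resB W a).card : ℝ) * (Rfac (a * W) * phiw x a) ≤
      (W : ℝ) ^ 2 *
        (Real.exp (4 / w) * (1 / (c * Real.log x) ^ 2 + (1 / c - 1) / Real.log x / W)) := by
  set E := Real.exp (4 / w) * (1 / (c * Real.log x) ^ 2 + (1 / c - 1) / Real.log x / W) with hE
  have hR0 : 0 ≤ Rfac W := Finset.prod_nonneg fun p _ => by positivity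
  have hE0 : 0 ≤ E := (Finset.sum_nonneg fun a _ => mul_nonneg (Ffac_nonneg W a)
    (phiw_nonneg x a)).trans (class_sum (r := 0) hx hc hcx hY hW hc1 hw hpW)
  rw [← Finset.sum_fiberwise_of_maps_to (t := Finset.range W) (g := fun a => a % W)
    (fun a _ => Finset.mem_range.2 (Nat.mod_lt _ hW))]
  calc _ ≤ ∑ r ∈ Finset.range W, (Rfac W * (resB W r).card) * E := by
        refine Finset.sum_le_sum fun r hr => ?_
        have hr' := Finset.mem_range.1 hr
        have hset : (Finset.Icc 1 Y).filter (fun a => a % W = r) =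
            (Finset.Icc 1 Y).filter (fun a => a ≡ r [MOD W]) := by
          refine Finset.filter_congr fun a _ => ?_
          rw [Nat.ModEq, Nat.mod_eq_of_lt hr']
        calc _ = ∑ a ∈ (Finset.Icc 1 Y).filter (fun a => a % W = r),
              (Rfac W * (resB W r).card) * (Ffac W a * phiw x a) := by
              refine Finset.sum_congr rfl fun a ha => ?_
              simp only [Finset.mem_filter, Finset.mem_Icc] at ha
              rw [Rfac_mul (by omega) hW.ne', ← ha.2, resB_mod]
              ring
          _ ≤ _ := by
              rw [← Finset.mul_sum, hset]
              refine mul_le_mul_of_nonneg_left ?_ (by positivity)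
              exact class_sum hx hc hcx hY hW hc1 hw hpW
    _ = Rfac W * ((∑ r ∈ Finset.range W, (resB W r).card : ℕ) : ℝ) * E := by
        rw [← Finset.sum_mul, ← Finset.mul_sum]; push_cast; rfl
    _ ≤ Rfac W * ((W.totient ^ 2 : ℕ) : ℝ) * E := by
        gcongr
        exact resB_total W hW
    _ = _ := by
        push_cast; rw [Rfac_totient hW.ne']

end AverD


/-- the sifted set -/
noncomputable def siftSet (a W b N z : ℕ) : Finset ℕ :=
  (baseSet W b N).filter
    (fun n => ∀ p : ℕ, p.Prime → p ≤ z → ¬ p ∣ a * W → ¬ p ∣ n * (a * n + 1))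

lemma Pplus_spec {n : ℕ} (h0 : n ≠ 0) (h1 : n ≠ 1) : (Pplus n).Prime ∧ Pplus n ∣ n := by
  rw [Pplus, if_neg h1]
  have hne : n.primeFactors.Nonempty := Nat.nonempty_primeFactors.2 (by omega)
  obtain ⟨q, hq, he⟩ := Finset.exists_mem_eq_sup n.primeFactors hne id
  rw [he]
  exact ⟨Nat.prime_of_mem_primeFactors hq, Nat.dvd_of_mem_primeFactors hq⟩

lemma T_cover {c x : ℝ} {W M : ℕ} (hx : 1 ≤ x) (hc : 0 < c) (hc1 : c < 1) (z : ℕ → ℕ)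
    (hM : 2 ≤ M) (hW0 : 0 < W) (hz : ∀ a, 1 ≤ a → (z a : ℝ) < (M : ℝ) ^ c)
    (hW : ∀ p : ℕ, p.Prime → p ∣ W → (p : ℝ) < (M : ℝ) ^ c) :
    (T c x : ℝ) ≤ M + 1 + ∑ a ∈ Finset.Icc 1 ⌊x ^ (1 - c)⌋₊, ∑ b ∈ resB W a,
      ((siftSet a W b ⌊x / a⌋₊ (z a)).card : ℝ) := by
  have hsub : (Finset.range (⌊x⌋₊ + 1)).filter
      (fun p : ℕ => p.Prime ∧ (p : ℝ) ^ c ≤ (Pplus (p - 1) : ℝ)) ⊆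
      Finset.range (M + 1) ∪ (Finset.Icc 1 ⌊x ^ (1 - c)⌋₊).biUnion (fun a =>
        (resB W a).biUnion (fun b => (siftSet a W b ⌊x / a⌋₊ (z a)).image (fun n => a * n + 1))) := by
    intro p hp
    rw [Finset.mem_filter, Finset.mem_range] at hp
    obtain ⟨hpx, hpp, hpc⟩ := hp
    rw [Finset.mem_union, Finset.mem_range]
    by_cases hpM : p < M + 1
    · exact Or.inl hpM
    right
    obtain ⟨hq, hqd⟩ := Pplus_spec (n := p - 1) (by omega) (by omega)
    set q := Pplus (p - 1) with hqdef
    obtain ⟨a, ha⟩ := hqd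
    have hpe : p = a * q + 1 := by rw [mul_comm] at ha; omega
    have ha1 : 1 ≤ a := by
      rcases Nat.eq_zero_or_pos a with h | h
      · subst h; simp at hpe; omega
      · exact h
    have hp0 : (0 : ℝ) < p := by exact_mod_cast hpp.pos
    have hpxr : (p : ℝ) ≤ x := by
      have : p ≤ ⌊x⌋₊ := by omega
      exact (Nat.le_floor_iff (by linarith)).1 this
    have hpc0 : 0 < (p : ℝ) ^ c := Real.rpow_pos_of_pos hp0 c
    have haq : (a : ℝ) * q ≤ p := by
      have : a * q ≤ p := by omega
      exact_mod_cast this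
    have ha0 : (0 : ℝ) < a := by exact_mod_cast ha1
    have hax : (a : ℝ) ≤ x ^ (1 - c) := by
      have h1 : (a : ℝ) * (p : ℝ) ^ c ≤ p := (mul_le_mul_of_nonneg_left hpc ha0.le).trans haq
      have h2 : (a : ℝ) ≤ (p : ℝ) ^ (1 - c) := by
        rw [Real.rpow_sub hp0, Real.rpow_one, le_div_iff₀ hpc0]; exact h1
      exact h2.trans (Real.rpow_le_rpow hp0.le hpxr (by linarith))
    have hMq : (M : ℝ) ^ c ≤ q := by
      refine le_trans (Real.rpow_le_rpow (by positivity) ?_ hc.le) hpc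
      have : M ≤ p := by omega
      exact_mod_cast this
    have hqp : q ≤ p := by
      have : q ≤ a * q := Nat.le_mul_of_pos_left q ha1
      omega
    have cop : ∀ r : ℕ, r.Prime → q ≤ r → r.Coprime W := by
      intro r hr hqr
      rw [Nat.Prime.coprime_iff_not_dvd hr]
      intro hd
      have h1 := hW r hr hd
      have h2 : (q : ℝ) ≤ r := by exact_mod_cast hqr
      linarith
    have hzq : z a < q := by
      have := (hz a ha1).trans_le hMq
      exact_mod_cast this
    rw [Finset.mem_biUnion]
    refine ⟨a, ?_, ?_⟩
    · rw [Finset.mem_Icc]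
      exact ⟨ha1, Nat.le_floor hax⟩
    rw [Finset.mem_biUnion]
    refine ⟨q % W, ?_, ?_⟩
    · rw [resB, Finset.mem_filter, Finset.mem_range]
      refine ⟨Nat.mod_lt _ hW0, ?_, ?_⟩
      · have := cop q hq le_rfl
        rw [Nat.Coprime, (Nat.mod_modEq q W).gcd_eq]; exact this
      · have := cop p hpp hqp
        rw [Nat.Coprime, (((Nat.mod_modEq q W).mul_left a).add_right 1).gcd_eq, ← hpe]; exact this
    rw [Finset.mem_image]
    refine ⟨q, ?_, hpe.symm⟩
    rw [siftSet, Finset.mem_filter, baseSet, Finset.mem_filter, Finset.mem_Ioc]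
    refine ⟨⟨⟨hq.pos, ?_⟩, (Nat.mod_modEq q W).symm⟩, ?_⟩
    · refine Nat.le_floor ?_
      rw [le_div_iff₀ ha0]; linarith
    · intro r hr hrz _ hd
      rw [← hpe] at hd
      rcases (Nat.Prime.dvd_mul hr).1 hd with h | h
      · have := (Nat.prime_dvd_prime_iff_eq hr hq).1 h
        omega
      · have := (Nat.prime_dvd_prime_iff_eq hr hpp).1 h
        omega
  have hcard := (Finset.card_le_card hsub).trans (Finset.card_union_le _ _)
  rw [Finset.card_range] at hcard
  have h2 : ((Finset.Icc 1 ⌊x ^ (1 - c)⌋₊).biUnion (fun a =>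
        (resB W a).biUnion (fun b =>
          (siftSet a W b ⌊x / a⌋₊ (z a)).image (fun n => a * n + 1)))).card ≤
      ∑ a ∈ Finset.Icc 1 ⌊x ^ (1 - c)⌋₊, ∑ b ∈ resB W a, (siftSet a W b ⌊x / a⌋₊ (z a)).card := by
    refine Finset.card_biUnion_le.trans (Finset.sum_le_sum fun a _ => ?_)
    exact Finset.card_biUnion_le.trans (Finset.sum_le_sum fun b _ => Finset.card_image_le)
  have h3 : T c x ≤ (M + 1) + ∑ a ∈ Finset.Icc 1 ⌊x ^ (1 - c)⌋₊, ∑ b ∈ resB W a,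
      (siftSet a W b ⌊x / a⌋₊ (z a)).card := by
    unfold T
    exact hcard.trans (Nat.add_le_add_left h2 _)
  exact_mod_cast h3

lemma Rfac_pos (Q : ℕ) : 0 < Rfac Q := by
  refine Finset.prod_pos fun p hp => ?_
  have := prime_inv_lt (Nat.prime_of_mem_primeFactors hp)
  have : 0 < 1 - 1 / (p : ℝ) := by linarith
  positivity

lemma sift_bound {x η : ℝ} {a W b : ℕ} (ha : 0 < a) (hW : 0 < W) (hη : 0 < η) (hη2 : η < 1 / 2)
    (h3 : ∀ p : ℕ, p.Prime → ¬ p ∣ W → 3 ≤ p ∧ 6 ≤ (p : ℝ) ^ η) (hxa : 1 < x / a) :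
    ((siftSet a W b ⌊x / a⌋₊ ⌊(x / a) ^ (1 / 2 - η)⌋₊).card : ℝ) ≤
      2 * x / (W * (1 / 2 - η) ^ 2) * (Rfac (a * W) * phiw x a) + (x / a) ^ (1 - η) := by
  set u := x / a with hu
  have hu0 : 0 < u := by linarith
  set z := ⌊u ^ (1 / 2 - η)⌋₊ with hz
  have ha0 : (0 : ℝ) < a := by exact_mod_cast ha
  have hW0 : (0 : ℝ) < W := by exact_mod_cast hW
  have hκ : 0 < 1 / 2 - η := by linarith
  have h1u : 1 ≤ u ^ (1 / 2 - η) := Real.one_le_rpow hxa.le hκ.le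
  have hz1 : 1 ≤ z := Nat.le_floor (by simpa using h1u)
  have hzle : (z : ℝ) ≤ u ^ (1 / 2 - η) := Nat.floor_le (by positivity)
  have hlogu : 0 < Real.log u := Real.log_pos hxa
  have hlz : (1 / 2 - η) * Real.log u ≤ Real.log ((z : ℝ) + 1) := by
    rw [← Real.log_rpow hu0]
    exact Real.log_le_log (by positivity) (Nat.lt_floor_add_one _).le
  have hS := Ssum_lower (a * W) z (by positivity)
    (fun p hp hd => (h3 p hp (fun h => hd (h.mul_left a))).1)
  have hR := Rfac_pos (a * W)
  have hl2 : ((1 / 2 - η) * Real.log u) ^ 2 ≤ Real.log ((z : ℝ) + 1) ^ 2 :=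
    pow_le_pow_left₀ (by positivity) hlz 2
  have hSlow : 1 / 2 * ((1 / 2 - η) * Real.log u) ^ 2 / Rfac (a * W) ≤ Ssum (a * W) z := by
    rw [div_le_iff₀ hR]; linarith
  have hlow0 : 0 < 1 / 2 * ((1 / 2 - η) * Real.log u) ^ 2 / Rfac (a * W) := by positivity
  have hmain := twin_bound (a := a) (W := W) (b := b) (N := ⌊u⌋₊) (z := z) ha hW hz1 hη h3
  refine hmain.trans (add_le_add ?_ ?_)
  · calc (⌊u⌋₊ : ℝ) / W / Ssum (a * W) z ≤ u / W / Ssum (a * W) z := by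
          have := hlow0.trans_le hSlow
          gcongr
          exact Nat.floor_le hu0.le
      _ ≤ u / W / (1 / 2 * ((1 / 2 - η) * Real.log u) ^ 2 / Rfac (a * W)) := by
          gcongr
      _ = 2 * x / (W * (1 / 2 - η) ^ 2) * (Rfac (a * W) * phiw x a) := by
          have hx : x = u * a := by rw [hu]; field_simp
          rw [phiw, ← hu]
          rw [hx]
          field_simp
  · have h1 : (z : ℝ) ^ (1 + η) ≤ (u ^ (1 / 2 - η)) ^ (1 + η) :=
      Real.rpow_le_rpow (by positivity) hzle (by linarith)
    calc ((z : ℝ) ^ (1 + η)) ^ 2 ≤ ((u ^ (1 / 2 - η)) ^ (1 + η)) ^ 2 :=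
          pow_le_pow_left₀ (by positivity) h1 2
      _ = u ^ ((1 / 2 - η) * (1 + η) * 2) := by
          rw [Real.rpow_mul hu0.le, Real.rpow_mul hu0.le]
          norm_cast
      _ ≤ u ^ (1 - η) := by
          refine Real.rpow_le_rpow_of_exponent_le hxa.le ?_
          nlinarith

lemma sum_inv_le (Y : ℕ) : ∑ a ∈ Finset.Icc 1 Y, 1 / (a : ℝ) ≤ 1 + Real.log Y := by
  have := harmonic_le_one_add_log Y
  rw [harmonic_eq_sum_Icc] at this
  push_cast at this
  simpa only [one_div] using this

theorem T_upper {x c η : ℝ} {W w M : ℕ} (hx : 1 < x) (hc : 0 < c) (hc1 : c < 1)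
    (hcx : 3 ≤ c * Real.log x) (hW : 0 < W) (hη : 0 < η) (hη2 : η < 1 / 2) (hw : 2 ≤ w)
    (hpW : ∀ p : ℕ, p.Prime → ¬ p ∣ W → w < p ∧ 6 ≤ (p : ℝ) ^ η)
    (hM : 2 ≤ M) (hMx : x ^ (1 / 2 : ℝ) < (M : ℝ) ^ c) (hMW : (W : ℝ) < (M : ℝ) ^ c) :
    (T c x : ℝ) ≤ M + 1 + 2 * x / (W * (1 / 2 - η) ^ 2) * ((W : ℝ) ^ 2 *
        (Real.exp (4 / w) * (1 / (c * Real.log x) ^ 2 + (1 / c - 1) / Real.log x / W)))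
      + W * (x * x ^ (-(c * η)) * (1 + Real.log x)) := by
  have hx0 : 0 < x := by linarith
  set Y := ⌊x ^ (1 - c)⌋₊ with hYdef
  have hlx : 0 < Real.log x := Real.log_pos hx
  have hYx : (Y : ℝ) ≤ x ^ (1 - c) := Nat.floor_le (by positivity)
  have hYle : (Y : ℝ) ≤ x := hYx.trans (by
    conv_rhs => rw [← Real.rpow_one x]
    exact Real.rpow_le_rpow_of_exponent_le hx.le (by linarith))
  have hxa : ∀ a : ℕ, 1 ≤ a → a ≤ Y → x ^ c ≤ x / a := by
    intro a ha haY
    have ha0 : (0 : ℝ) < a := by exact_mod_cast ha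
    rw [le_div_iff₀ ha0]
    have h1 : (a : ℝ) ≤ x ^ (1 - c) := le_trans (by exact_mod_cast haY) hYx
    calc x ^ c * a ≤ x ^ c * x ^ (1 - c) := by gcongr
      _ = x := by rw [← Real.rpow_add hx0]; simp
  have hxc : 1 < x ^ c := Real.one_lt_rpow hx hc
  have hlog : ∀ a : ℕ, 1 ≤ a → a ≤ Y → c * Real.log x ≤ Real.log (x / a) := by
    intro a ha haY
    rw [← Real.log_rpow hx0]
    exact Real.log_le_log (by positivity) (hxa a ha haY)
  have hcov := T_cover (c := c) (x := x) (W := W) (M := M) hx.le hc hc1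
    (fun a => ⌊(x / a) ^ (1 / 2 - η)⌋₊) hM hW ?_ ?_
  · refine hcov.trans ?_
    rw [add_assoc ((M : ℝ) + 1)]
    refine add_le_add le_rfl ?_
    have hav := aver_bound (x := x) (c := c) (Y := Y) (W := W) (w := w) hx0 hc hcx hlog hW hc1 hw
      (fun p hp hd => (hpW p hp hd).1)
    have hκ : 0 < 1 / 2 - η := by linarith
    have hW0 : (0 : ℝ) < W := by exact_mod_cast hW
    calc _ ≤ ∑ a ∈ Finset.Icc 1 Y, ∑ b ∈ resB W a,
            (2 * x / (W * (1 / 2 - η) ^ 2) * (Rfac (a * W) * phiw x a)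
              + x * x ^ (-(c * η)) * (1 / a)) := by
          refine Finset.sum_le_sum fun a ha => Finset.sum_le_sum fun b _ => ?_
          rw [Finset.mem_Icc] at ha
          have h := hxa a ha.1 ha.2
          refine (sift_bound (b := b) (by omega) hW hη hη2
            (fun p hp hd => ⟨by have := (hpW p hp hd).1; omega, (hpW p hp hd).2⟩)
            (hxc.trans_le h)).trans (add_le_add le_rfl ?_)
          have hxa0 : 0 < x / a := by linarith
          rw [sub_eq_add_neg, Real.rpow_add hxa0, Real.rpow_one]
          have h5 : (x / a) ^ (-η) ≤ x ^ (-(c * η)) := by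
            calc (x / a) ^ (-η) ≤ (x ^ c) ^ (-η) :=
                  Real.rpow_le_rpow_of_nonpos (by linarith) h (by linarith)
              _ = x ^ (-(c * η)) := by rw [← Real.rpow_mul hx0.le]; congr 1; ring
          calc x / a * (x / a) ^ (-η) ≤ x / a * x ^ (-(c * η)) := by gcongr
            _ = _ := by ring
      _ = 2 * x / (W * (1 / 2 - η) ^ 2) *
            ∑ a ∈ Finset.Icc 1 Y, ((resB W a).card : ℝ) * (Rfac (a * W) * phiw x a)
          + x * x ^ (-(c * η)) * ∑ a ∈ Finset.Icc 1 Y, ((resB W a).card : ℝ) * (1 / a) := by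
          rw [Finset.mul_sum, Finset.mul_sum, ← Finset.sum_add_distrib]
          refine Finset.sum_congr rfl fun a _ => ?_
          rw [Finset.sum_const, nsmul_eq_mul]; ring
      _ ≤ _ := by
          refine add_le_add (mul_le_mul_of_nonneg_left hav (by positivity)) ?_
          have h6 : ∑ a ∈ Finset.Icc 1 Y, ((resB W a).card : ℝ) * (1 / a) ≤
              W * (1 + Real.log x) := by
            calc _ ≤ ∑ a ∈ Finset.Icc 1 Y, (W : ℝ) * (1 / a) := by
                  refine Finset.sum_le_sum fun a _ => ?_
                  have : (resB W a).card ≤ W := by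
                    have := Finset.card_filter_le (Finset.range W)
                      (fun b => b.Coprime W ∧ (a * b + 1).Coprime W)
                    rw [Finset.card_range] at this
                    exact this
                  have : ((resB W a).card : ℝ) ≤ W := by exact_mod_cast this
                  gcongr
              _ = W * ∑ a ∈ Finset.Icc 1 Y, 1 / (a : ℝ) := by rw [Finset.mul_sum]
              _ ≤ W * (1 + Real.log x) := by
                  refine mul_le_mul_of_nonneg_left ((sum_inv_le Y).trans ?_) hW0.le
                  rcases Nat.eq_zero_or_pos Y with h | h
                  · rw [h]; simp; exact hlx.le
                  · have : (0 : ℝ) < Y := by exact_mod_cast h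
                    have := Real.log_le_log this hYle
                    linarith
          calc _ ≤ x * x ^ (-(c * η)) * (W * (1 + Real.log x)) := by gcongr
            _ = _ := by ring
  · intro a ha
    refine lt_of_le_of_lt ?_ hMx
    have ha1 : (1 : ℝ) ≤ a := by exact_mod_cast ha
    calc _ ≤ (x / a) ^ (1 / 2 - η) := Nat.floor_le (by positivity)
      _ ≤ x ^ (1 / 2 - η) :=
          Real.rpow_le_rpow (by positivity) (div_le_self hx0.le ha1) (by linarith)
      _ ≤ x ^ (1 / 2 : ℝ) := Real.rpow_le_rpow_of_exponent_le hx.le (by linarith)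
  · intro p hp hd
    refine lt_of_le_of_lt ?_ hMW
    exact_mod_cast Nat.le_of_dvd hW hd


lemma exists_params {c : ℝ} (hc1 : 16 / 17 < c) : ∃ η : ℝ, 0 < η ∧ η < 1 / 2 ∧
    2 / (1 / 2 - η) ^ 2 * Real.exp η * (1 / c - 1) < 1 / 2 := by
  have hc0 : 0 < c := by linarith
  have hk : 1 / c - 1 < 1 / 16 := by
    have : 1 / c < 17 / 16 := by rw [div_lt_iff₀ hc0]; linarith
    linarith
  have hcont : ContinuousAt
      (fun η : ℝ => 2 / (1 / 2 - η) ^ 2 * Real.exp η * (1 / c - 1)) 0 := by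
    refine ContinuousAt.mul (ContinuousAt.mul (ContinuousAt.div ?_ ?_ ?_) ?_) ?_
    · fun_prop
    · fun_prop
    · norm_num
    · fun_prop
    · fun_prop
  have hev := Filter.Tendsto.eventually_lt_const (u := (1 / 2 : ℝ)) (by
    have e : 2 / (1 / 2 - (0 : ℝ)) ^ 2 * Real.exp 0 * (1 / c - 1) = 8 * (1 / c - 1) := by
      rw [Real.exp_zero]; norm_num
    show 2 / (1 / 2 - (0 : ℝ)) ^ 2 * Real.exp 0 * (1 / c - 1) < 1 / 2
    rw [e]; linarith) hcont
  have hev2 : ∀ᶠ η : ℝ in nhdsWithin 0 (Set.Ioi 0),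
      2 / (1 / 2 - η) ^ 2 * Real.exp η * (1 / c - 1) < 1 / 2 := nhdsWithin_le_nhds hev
  have hev3 : ∀ᶠ η : ℝ in nhdsWithin 0 (Set.Ioi 0), η < 1 / 2 :=
    nhdsWithin_le_nhds (gt_mem_nhds (by norm_num))
  obtain ⟨η, h1, h2, h3⟩ := (hev2.and (hev3.and self_mem_nhdsWithin)).exists
  exact ⟨η, h3, h2, h1⟩

lemma log_mul_rpow_neg {s : ℝ} (hs : 0 < s) :
    Filter.Tendsto (fun x : ℝ => x ^ (-s) * Real.log x) Filter.atTop (nhds 0) := by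
  have h := (isLittleO_log_rpow_atTop hs).tendsto_div_nhds_zero
  refine h.congr' ?_
  filter_upwards [Filter.eventually_gt_atTop 0] with x hx
  rw [Real.rpow_neg hx.le, div_eq_inv_mul]

lemma T_asymp {c : ℝ} (hc1 : 16 / 17 < c) (hc2 : c < 1) : ∃ δ : ℝ, 0 < δ ∧ δ < 1 / 2 ∧
    ∀ᶠ x : ℝ in Filter.atTop, (T c x : ℝ) ≤ (1 / 2 - δ) * (x / Real.log x) := by
  have hc0 : 0 < c := by linarith
  obtain ⟨η, hη, hη2, hA⟩ := exists_params hc1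
  have hwev : ∀ᶠ w : ℕ in Filter.atTop, 6 ≤ (w : ℝ) ^ η ∧ 4 / (w : ℝ) ≤ η ∧ 2 ≤ w := by
    have h1 : Filter.Tendsto (fun w : ℕ => (w : ℝ) ^ η) Filter.atTop Filter.atTop :=
      (tendsto_rpow_atTop hη).comp tendsto_natCast_atTop_atTop
    have h2 : Filter.Tendsto (fun w : ℕ => 4 / (w : ℝ)) Filter.atTop (nhds 0) :=
      tendsto_const_div_atTop_nhds_zero_nat 4
    filter_upwards [h1.eventually_ge_atTop 6, h2.eventually (gt_mem_nhds hη),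
      Filter.eventually_ge_atTop 2] with w a1 a2 a3
    exact ⟨a1, a2.le, a3⟩
  obtain ⟨w, hw6, hw4, hw2⟩ := hwev.exists
  set W := w.factorial with hWdef
  have hW : 0 < W := Nat.factorial_pos w
  have hW0 : (0 : ℝ) < W := by exact_mod_cast hW
  have hpW : ∀ p : ℕ, p.Prime → ¬ p ∣ W → w < p ∧ 6 ≤ (p : ℝ) ^ η := by
    intro p hp hd
    have h1 : w < p := by
      by_contra hn
      exact hd ((hp.dvd_factorial).2 (by omega))
    refine ⟨h1, hw6.trans (Real.rpow_le_rpow (by positivity) ?_ hη.le)⟩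
    exact_mod_cast h1.le
  set k := 1 / c - 1 with hk
  have hk0 : 0 ≤ k := by
    have : 1 ≤ 1 / c := by rw [le_div_iff₀ hc0]; linarith
    rw [hk]; linarith
  have hκ : 0 < 1 / 2 - η := by linarith
  set A := 2 / (1 / 2 - η) ^ 2 * Real.exp (4 / w) with hAdef
  have hA0 : 0 < A := by positivity
  have hAk : A * k < 1 / 2 := by
    refine lt_of_le_of_lt (mul_le_mul_of_nonneg_right ?_ hk0) hA
    exact mul_le_mul_of_nonneg_left (Real.exp_le_exp.2 hw4) (by positivity)
  set B := A * k with hB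
  have hB0 : 0 ≤ B := by positivity
  have hcη : 0 < c * η := by positivity
  have hlim : Filter.Tendsto (fun x : ℝ => x ^ (-(1 / 10 : ℝ)) * Real.log x
      + 2 * (x ^ (-(1 : ℝ)) * Real.log x) + (B + A * W / c ^ 2 * (Real.log x)⁻¹)
      + W * (x ^ (-(c * η)) * Real.log x
        + (x ^ (-(c * η / 2)) * Real.log x) * (x ^ (-(c * η / 2)) * Real.log x)))
      Filter.atTop (nhds B) := by
    have e1 := log_mul_rpow_neg (s := 1 / 10) (by norm_num)
    have e2 := log_mul_rpow_neg (s := 1) (by norm_num)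
    have e3 := log_mul_rpow_neg hcη
    have e4 := log_mul_rpow_neg (s := c * η / 2) (by positivity)
    have e5 := Real.tendsto_log_atTop.inv_tendsto_atTop
    have := (((e1.add (e2.const_mul 2)).add ((e5.const_mul (A * W / c ^ 2)).const_add B)).add
      ((e3.add (e4.mul e4)).const_mul (W : ℝ)))
    simpa using this
  refine ⟨(1 / 2 - B) / 2, by linarith, by linarith, ?_⟩
  have hlogbig := Real.tendsto_log_atTop.eventually_ge_atTop (3 / c)
  have hWbig := (tendsto_rpow_atTop (show (0 : ℝ) < 1 / 2 by norm_num)).eventually_ge_atTop (W : ℝ)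
  have h9 := (tendsto_rpow_atTop (show (0 : ℝ) < 9 / 10 by norm_num)).eventually_ge_atTop (2 : ℝ)
  filter_upwards [hlogbig, hWbig, h9, Filter.eventually_gt_atTop 1,
    hlim.eventually (gt_mem_nhds (show B < 1 / 2 - (1 / 2 - B) / 2 by linarith))]
    with x hl hWx h9x hx hG
  have hx0 : 0 < x := by linarith
  have hlx : 0 < Real.log x := Real.log_pos hx
  set M := ⌈x ^ (9 / 10 : ℝ)⌉₊ with hM
  have hMge : x ^ (9 / 10 : ℝ) ≤ M := Nat.le_ceil _
  have hMle : (M : ℝ) ≤ x ^ (9 / 10 : ℝ) + 1 := (Nat.ceil_lt_add_one (by positivity)).le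
  have hM2 : 2 ≤ M := by
    have : (2 : ℝ) ≤ M := h9x.trans hMge
    exact_mod_cast this
  have hMc : x ^ (1 / 2 : ℝ) < (M : ℝ) ^ c := by
    calc x ^ (1 / 2 : ℝ) < x ^ (9 / 10 * c) := Real.rpow_lt_rpow_of_exponent_lt hx (by linarith)
      _ = (x ^ (9 / 10 : ℝ)) ^ c := Real.rpow_mul hx0.le _ _
      _ ≤ (M : ℝ) ^ c := Real.rpow_le_rpow (by positivity) hMge hc0.le
  have hcl : 3 ≤ c * Real.log x := by
    rw [div_le_iff₀ hc0] at hl; linarith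
  have hT := T_upper (x := x) (c := c) (η := η) (W := W) (w := w) (M := M) hx hc0 hc2 hcl hW hη hη2
    hw2 hpW hM2 hMc (lt_of_le_of_lt hWx hMc)
  rw [← hk] at hT
  refine hT.trans ?_
  rw [mul_div_assoc', le_div_iff₀ hlx]
  have e9 : x ^ (9 / 10 : ℝ) = x * x ^ (-(1 / 10 : ℝ)) := by
    nth_rewrite 2 [← Real.rpow_one x]
    rw [← Real.rpow_add hx0]; norm_num
  have e10 : x * x ^ (-(1 : ℝ)) = 1 := by
    rw [Real.rpow_neg_one]; field_simp
  have e11 : x ^ (-(c * η)) = x ^ (-(c * η / 2)) * x ^ (-(c * η / 2)) := by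
    rw [← Real.rpow_add hx0]; congr 1; ring
  have e12 : 2 * x / (W * (1 / 2 - η) ^ 2) * ((W : ℝ) ^ 2 *
      (Real.exp (4 / w) * (1 / (c * Real.log x) ^ 2 + k / Real.log x / W))) * Real.log x
      = x * (B + A * W / c ^ 2 * (Real.log x)⁻¹) := by
    rw [hB, hAdef]
    generalize 1 / 2 - η = κ at *
    field_simp
    ring
  have e13 : ((M : ℝ) + 1) * Real.log x ≤
      x * (x ^ (-(1 / 10 : ℝ)) * Real.log x + 2 * (x ^ (-(1 : ℝ)) * Real.log x)) := by
    have : x * (x ^ (-(1 / 10 : ℝ)) * Real.log x + 2 * (x ^ (-(1 : ℝ)) * Real.log x))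
      = (x * x ^ (-(1 / 10 : ℝ)) + 2 * (x * x ^ (-(1 : ℝ)))) * Real.log x := by ring
    rw [this, ← e9, e10]
    exact mul_le_mul_of_nonneg_right (by linarith) hlx.le
  have e14 : (W : ℝ) * (x * x ^ (-(c * η)) * (1 + Real.log x)) * Real.log x =
      x * (W * (x ^ (-(c * η)) * Real.log x
        + (x ^ (-(c * η / 2)) * Real.log x) * (x ^ (-(c * η / 2)) * Real.log x))) := by
    rw [e11]; ring
  rw [add_mul, add_mul, e12, e14]
  have hG' := mul_le_mul_of_nonneg_left hG.le hx0.le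
  rw [mul_add, mul_add] at hG'
  linarith

/-- For `16/17 < c < 1`, `limsup_{x→∞} T_c(x)/π(x) < 1/2`. -/
theorem limsup_T_div_pi_lt_half (c : ℝ) (hc1 : 16 / 17 < c) (hc2 : c < 1) :
    ∃ δ : ℝ, 0 < δ ∧ ∃ x₀ : ℝ, ∀ x ≥ x₀,
      (T c x : ℝ) ≤ (1 / 2 - δ) * (primePi x : ℝ) := by
  obtain ⟨δ, hδ, hδ2, hT⟩ := T_asymp hc1 hc2
  obtain ⟨x₀, h⟩ := Filter.eventually_atTop.1
    ((hT.and (pnt_lower hδ)).and (Filter.eventually_gt_atTop 1))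
  refine ⟨δ / 2, by linarith, x₀, fun x hx => ?_⟩
  obtain ⟨⟨h1, h2⟩, h3⟩ := h x hx
  have hpi : Nat.primeCounting ⌊x⌋₊ = primePi x := by
    rw [Nat.primeCounting, Nat.primeCounting', Nat.count_eq_card_filter_range, primePi]
  rw [hpi] at h2
  have hX : 0 ≤ x / Real.log x := div_nonneg (by linarith) (Real.log_pos h3).le
  have h4 := mul_le_mul_of_nonneg_left h2 (show 0 ≤ 1 / 2 - δ / 2 by linarith)
  have h5 : (1 / 2 - δ) * (x / Real.log x) ≤
      (1 / 2 - δ / 2) * ((1 - δ) * (x / Real.log x)) := by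
    nlinarith [mul_nonneg (sq_nonneg δ) hX]
  linarith
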